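/- Let Φ̊ ⊂ ℝ⁴ be the root system of type F₄, let (Λ_α) be an extension datum of type (Φ̊, Y) with common values Λ_s on short and Λ_ℓ on long roots, and let Φ^re be the associated set of real roots. Then Ψ ⊆ Φ^re is a maximal closed subroot system whose gradient Gr(Ψ) is a semi-closed subroot system of Φ̊ if and only if there exist a subgroup H of Λ_s of index 2 with Λ_ℓ ⊆ H, a subset I ⊆ {1,2,3,4} with |I| = 2, and a ℤ-linear map τ : Φ̊_s → Λ_s/H satisfying τ(εᵢ) = τ(εⱼ) whenever i, j ∈ I or i, j ∉ I, and τ(ε_r) ≠ τ(ε_s) whenever r ∈ I and s ∉ I, such that Ψ = {α ⊕ y : α ∈ Φ̊_s, y ∈ Λ_s, y + H = τ(α)} ∪ {(±εᵢ ± εⱼ) ⊕ y : y ∈ Λ_ℓ, i ≠ j, and either i, j ∈ I or i, j ∉ I}. -/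

import Mathlib

open scoped RealInnerProductSpace Pointwise

noncomputable section

namespace BdS

variable {V Y : Type*} [NormedAddCommGroup V] [InnerProductSpace ℝ V]
variable [AddCommGroup Y] [Module ℝ Y]

/-- `pairing β α = (β, α∨) = 2(β,α)/(α,α)`. -/
def pairing (β α : V) : ℝ := 2 * ⟪β, α⟫ / ⟪α, α⟫

/-- `reflRoot α v = s_α(v) = v − (v, α∨)α`. -/
def reflRoot (α v : V) : V := v - pairing v α • α

/-- A (finite) root system in `V`. -/
def IsRootSystem (Φ : Set V) : Prop :=
  Φ.Finite ∧ (0 : V) ∉ Φ ∧ Submodule.span ℝ Φ = ⊤ ∧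
    (∀ α ∈ Φ, ∀ β ∈ Φ, reflRoot α β ∈ Φ) ∧
    ∀ α ∈ Φ, ∀ β ∈ Φ, ∃ m : ℤ, pairing β α = (m : ℝ)

def IsReduced (Φ : Set V) : Prop :=
  ∀ α ∈ Φ, ∀ c : ℝ, c • α ∈ Φ → c • α = α ∨ c • α = -α

def IsIrreducible (Φ : Set V) : Prop :=
  ∀ Φ₁ Φ₂ : Set V, Φ = Φ₁ ∪ Φ₂ → (∀ x ∈ Φ₁, ∀ y ∈ Φ₂, ⟪x, y⟫ = 0) →
    Φ₁ = ∅ ∨ Φ₂ = ∅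

/-- divisible roots -/
def divSet (Φ : Set V) : Set V := {α ∈ Φ | (2:ℝ)⁻¹ • α ∈ Φ}
/-- non-divisible roots -/
def ndSet (Φ : Set V) : Set V := Φ \ divSet Φ
/-- short roots: non-divisible roots of non-maximal squared length -/
def shortSet (Φ : Set V) : Set V := {α ∈ ndSet Φ | ∃ β ∈ ndSet Φ, ⟪α, α⟫ < ⟪β, β⟫}
/-- long roots -/
def longSet (Φ : Set V) : Set V := ndSet Φ \ shortSet Φ

/-- An extension datum of type `(Φ, Y)`. -/
def IsExtensionDatum (Φ : Set V) (Λ : V → Set Y) : Prop :=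
  (∀ α ∈ Φ, ∀ β ∈ Φ, ∀ z ∈ Λ α, ∀ y ∈ Λ β, y - pairing β α • z ∈ Λ (reflRoot α β)) ∧
  (0 : Y) ∈ Λ 0 ∧
  (∀ α ∈ ndSet Φ, (0 : Y) ∈ Λ α) ∧
  (∀ α ∈ divSet Φ, (Λ α).Nonempty) ∧
  Submodule.span ℝ (⋃ α ∈ insert (0 : V) Φ, Λ α) = ⊤

/-- subroot system of a finite root system -/
def IsSubRS (Φ Δ : Set V) : Prop :=
  Δ.Nonempty ∧ Δ ⊆ Φ ∧ ∀ α ∈ Δ, ∀ β ∈ Δ, reflRoot α β ∈ Δ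

def IsClosedSubRS (Φ Δ : Set V) : Prop :=
  IsSubRS Φ Δ ∧ ∀ α ∈ Δ, ∀ β ∈ Δ, α + β ∈ Φ → α + β ∈ Δ

def IsMaxClosedSubRS (Φ Δ : Set V) : Prop :=
  IsClosedSubRS Φ Δ ∧ Δ ≠ Φ ∧
    ∀ Δ' : Set V, IsClosedSubRS Φ Δ' → Δ' ≠ Φ → Δ ⊆ Δ' → Δ' = Δ

/-- semi-closed subroot system, relative to given short/long/divisible parts -/
def IsSemiClosedSubRS (Φ Φs Φl Φd Δ : Set V) : Prop :=
  IsSubRS Φ Δ ∧ ¬ (∀ α ∈ Δ, ∀ β ∈ Δ, α + β ∈ Φ → α + β ∈ Δ) ∧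
    ∀ α ∈ Δ, ∀ β ∈ Δ, α + β ∈ Φ → α + β ∉ Δ →
      (α ∈ Φs ∧ β ∈ Φs ∧ α + β ∈ Φl ∪ Φd) ∨ (α ∈ Φl ∧ β ∈ Φl ∧ α + β ∈ Φd)

def IsMaxSemiClosedSubRS (Φ Φs Φl Φd Δ : Set V) : Prop :=
  IsSemiClosedSubRS Φ Φs Φl Φd Δ ∧
    ∀ Δ' : Set V, IsClosedSubRS Φ Δ' → Δ' ≠ Φ → ¬ Δ ⊂ Δ'

/-- the set of real roots attached to an extension datum -/
def PhiRe (Φ : Set V) (Λ : V → Set Y) : Set (V × Y) := {x | x.1 ∈ Φ ∧ x.2 ∈ Λ x.1}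

/-- affine reflection `s_{α ⊕ y}(β ⊕ z) = s_α(β) ⊕ (z − (β,α∨)y)` -/
def reflAff (a x : V × Y) : V × Y := (reflRoot a.1 x.1, x.2 - pairing x.1 a.1 • a.2)

/-- subroot system of a set of real roots `R` -/
def IsSubSys (R Ψ : Set (V × Y)) : Prop :=
  Ψ.Nonempty ∧ Ψ ⊆ R ∧ Ψ ≠ R ∧ ∀ a ∈ Ψ, ∀ x ∈ Ψ, reflAff a x ∈ Ψ

def IsClosedSubSys (R Ψ : Set (V × Y)) : Prop :=
  IsSubSys R Ψ ∧ ∀ x ∈ Ψ, ∀ y ∈ Ψ, x + y ∈ R → x + y ∈ Ψ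

def IsMaxClosedSubSys (R Ψ : Set (V × Y)) : Prop :=
  IsClosedSubSys R Ψ ∧ ∀ Ψ' : Set (V × Y), IsClosedSubSys R Ψ' → Ψ ⊆ Ψ' → Ψ' = Ψ

/-- gradient of a subroot system -/
def Gr (Ψ : Set (V × Y)) : Set V := {α | ∃ y : Y, (α, y) ∈ Ψ}

def Zset (Ψ : Set (V × Y)) (α : V) : Set Y := {y | (α, y) ∈ Ψ}

abbrev E (n : ℕ) := EuclideanSpace ℝ (Fin n)

def eps {n : ℕ} (i : Fin n) : E n := EuclideanSpace.single i 1

def shortBC (n : ℕ) : Set (E n) := {v | ∃ i : Fin n, v = eps i ∨ v = -eps i}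

def longBC (n : ℕ) : Set (E n) :=
  {v | ∃ i j : Fin n, i ≠ j ∧ ∃ c d : ℝ, (c = 1 ∨ c = -1) ∧ (d = 1 ∨ d = -1) ∧
    v = c • eps i + d • eps j}

def divBC (n : ℕ) : Set (E n) :=
  {v | ∃ i : Fin n, v = (2:ℝ) • eps i ∨ v = -((2:ℝ) • eps i)}

def BCn (n : ℕ) : Set (E n) := shortBC n ∪ longBC n ∪ divBC n
def Bn (n : ℕ) : Set (E n) := shortBC n ∪ longBC n
def Cn (n : ℕ) : Set (E n) := longBC n ∪ divBC n

/-- short roots of `F₄`. -/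
def F4short : Set (E 4) :=
  shortBC 4 ∪
    {v | ∃ c : Fin 4 → ℝ, (∀ i, c i = 1 ∨ c i = -1) ∧ v = (2:ℝ)⁻¹ • ∑ i, c i • eps i}

/-- the root system of type `F₄`. -/
def F4 : Set (E 4) := F4short ∪ longBC 4

lemma eps_mem_F4short (i : Fin 4) : eps i ∈ F4short :=
  Set.mem_union_left _ ⟨i, Or.inl rfl⟩

/-- `ε_i` as an element of the group generated by the short roots of `F₄`. -/
def epsF4 (i : Fin 4) : AddSubgroup.closure F4short :=
  ⟨eps i, AddSubgroup.subset_closure (eps_mem_F4short i)⟩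

/-!
Everything rests on subgroups of `V × Y`: a proper nonempty intersection of the set `R` of real
roots with a subgroup is a closed subroot system, so a maximal `Ψ` contained in such a subgroup is
the whole intersection.

If the gradient of a maximal `Ψ` is semi-closed, then it contains every short root. Otherwise `Ψ`
would be cut out by the ℤ-span of its gradient and the gradient would be closed; and a short root in
that span lies in the gradient, because every sum equal to a short root has a summand of positive
inner product with it, which can be split off leaving a short root. Choosing points of `Ψ` over a
basis of the short roots gives a lift `τ` with `α ⊕ τ(α) ∈ Ψ` for all short `α`. Let `K` be the
group of translations that preserve `Ψ` over the short roots. It contains `Λl`, hence `2 Λs`, and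
`y - τ(α) ∈ K` for all `α ⊕ y ∈ Ψ`, while `τ(α) ∉ K` for a long root `α` outside the gradient.
Since `Λs / K` is an elementary abelian 2-group, `K` lies in some `H` of index two with `τ(α) ∉ H`,
and `Ψ` is the intersection of `R` with the graph of `τ` modulo `H`.

Conversely two real roots outside that graph differ by an element of it, so adjoining a single real
root to the intersection fills up one short fibre after another and then the long ones.

The set `I` records which `τ(ε_i)` lie in `H`. As `ε₁ - ε₂ + ε₃ - ε₄` is twice a short root, `I` has
an even number of elements, and it is neither empty nor everything exactly when some long root is
missing from the gradient.
-/

section IndexTwo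

variable {G : Type*} [AddCommGroup G]

lemma add_mem_iff_of_relIndex_two {H K : AddSubgroup G} (hidx : H.relIndex K = 2) {a b : G}
    (ha : a ∈ K) (hb : b ∈ K) : a + b ∈ H ↔ (a ∈ H ↔ b ∈ H) :=
  AddSubgroup.add_mem_iff_of_index_two hidx (a := ⟨a, ha⟩) (b := ⟨b, hb⟩)

lemma sub_mem_iff_of_relIndex_two {H K : AddSubgroup G} (hidx : H.relIndex K = 2) {a b : G}
    (ha : a ∈ K) (hb : b ∈ K) : a - b ∈ H ↔ (a ∈ H ↔ b ∈ H) := by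
  rw [sub_eq_add_neg, add_mem_iff_of_relIndex_two hidx ha (neg_mem hb), neg_mem_iff]

lemma exists_notMem_of_relIndex_two {H K : AddSubgroup G} (hidx : H.relIndex K = 2) :
    ∃ a ∈ K, a ∉ H := by
  by_contra! hKH
  rw [AddSubgroup.relIndex_eq_one.2 hKH] at hidx
  exact absurd hidx (by decide)

lemma exists_notMem_index_two {K : AddSubgroup G} (htwo : ∀ a : G, 2 • a ∈ K) {g : G}
    (hg : g ∉ K) : ∃ H : AddSubgroup G, K ≤ H ∧ g ∉ H ∧ H.index = 2 := by
  let : Module (ZMod 2) (G ⧸ K) := AddCommGroup.zmodModule fun x => by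
    induction x using QuotientAddGroup.induction_on with
    | H a => rw [← QuotientAddGroup.mk_nsmul, QuotientAddGroup.eq_zero_iff]; exact htwo a
  obtain ⟨f, hf⟩ : ∃ f : Module.Dual (ZMod 2) (G ⧸ K), f g ≠ 0 := by
    by_contra! hf
    exact hg ((QuotientAddGroup.eq_zero_iff g).1
      ((Module.forall_dual_apply_eq_zero_iff (ZMod 2) _).1 hf))
  let χ : G →+ ZMod 2 := f.toAddMonoidHom.comp (QuotientAddGroup.mk' K)
  have hsurj : Function.Surjective χ := by
    have eq_zero_or_eq : ∀ a b : ZMod 2, a ≠ 0 → b = 0 ∨ b = a := by decide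
    intro b
    rcases eq_zero_or_eq (χ g) b hf with rfl | rfl
    · exact ⟨0, map_zero χ⟩
    · exact ⟨g, rfl⟩
  refine ⟨χ.ker, fun k hk => ?_, hf, ?_⟩
  · have hk0 : (k : G ⧸ K) = 0 := (QuotientAddGroup.eq_zero_iff k).2 hk
    exact (congrArg f hk0).trans (map_zero f)
  · rw [AddSubgroup.index_ker, AddMonoidHom.range_eq_top.2 hsurj]
    simp

lemma exists_notMem_relIndex_two {K L : AddSubgroup G} (hKL : K ≤ L)
    (htwo : ∀ a ∈ L, 2 • a ∈ K) {g : G} (hgL : g ∈ L) (hgK : g ∉ K) :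
    ∃ H : AddSubgroup G, K ≤ H ∧ H ≤ L ∧ g ∉ H ∧ H.relIndex L = 2 := by
  obtain ⟨H, hKH, hgH, hidx⟩ := exists_notMem_index_two (K := K.addSubgroupOf L)
    (fun a => htwo a a.2) (g := ⟨g, hgL⟩) hgK
  refine ⟨H.map L.subtype, fun k hk => ⟨⟨k, hKL hk⟩, hKH hk, rfl⟩,
    AddSubgroup.map_subtype_le H, ?_, ?_⟩
  · rintro ⟨a, ha, rfl⟩
    exact hgH ha
  · rwa [AddSubgroup.relIndex, AddSubgroup.addSubgroupOf,
      AddSubgroup.comap_map_eq_self_of_injective L.subtype_injective]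

end IndexTwo

section CosetGraph

variable {A B : Type*} [AddCommGroup A] [AddCommGroup B] {L : AddSubgroup A}

/-- The graph of the map `L → B ⧸ H` induced by `τ : L →+ B`, as a subgroup of `A × B`. -/
def cosetGraph (τ : L →+ B) (H : AddSubgroup B) : AddSubgroup (A × B) where
  carrier := {x | ∃ h : x.1 ∈ L, x.2 - τ ⟨x.1, h⟩ ∈ H}
  zero_mem' := ⟨L.zero_mem, by
    rw [show (⟨(0 : A × B).1, L.zero_mem⟩ : L) = 0 from rfl, map_zero]; simp⟩
  add_mem' := by
    rintro ⟨a, b⟩ ⟨a', b'⟩ ⟨ha, hb⟩ ⟨ha', hb'⟩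
    refine ⟨L.add_mem ha ha', ?_⟩
    have hτ : τ ⟨a + a', L.add_mem ha ha'⟩ = τ ⟨a, ha⟩ + τ ⟨a', ha'⟩ := map_add τ ⟨a, ha⟩ ⟨a', ha'⟩
    simpa [hτ, add_sub_add_comm] using H.add_mem hb hb'
  neg_mem' := by
    rintro ⟨a, b⟩ ⟨ha, hb⟩
    refine ⟨L.neg_mem ha, ?_⟩
    have hτ : τ ⟨-a, L.neg_mem ha⟩ = -τ ⟨a, ha⟩ := map_neg τ ⟨a, ha⟩
    simpa [hτ, neg_add_eq_sub] using H.neg_mem hb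

lemma mk_mem_cosetGraph {τ : L →+ B} {H : AddSubgroup B} {a : A} (ha : a ∈ L) {b : B} :
    (a, b) ∈ cosetGraph τ H ↔ b - τ ⟨a, ha⟩ ∈ H :=
  ⟨fun ⟨_, h⟩ => h, fun h => ⟨ha, h⟩⟩

lemma sub_mem_cosetGraph_iff {τ : L →+ B} {H K : AddSubgroup B} (hidx : H.relIndex K = 2)
    (hτ : ∀ a, τ a ∈ K) {x y : A × B} (hx₁ : x.1 ∈ L) (hx₂ : x.2 ∈ K) (hy₁ : y.1 ∈ L)
    (hy₂ : y.2 ∈ K) : x - y ∈ cosetGraph τ H ↔ (x ∈ cosetGraph τ H ↔ y ∈ cosetGraph τ H) := by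
  have hτsub : τ ⟨x.1 - y.1, sub_mem hx₁ hy₁⟩ = τ ⟨x.1, hx₁⟩ - τ ⟨y.1, hy₁⟩ :=
    map_sub τ ⟨x.1, hx₁⟩ ⟨y.1, hy₁⟩
  rw [← Prod.mk.eta (p := x - y), Prod.fst_sub, Prod.snd_sub, mk_mem_cosetGraph (sub_mem hx₁ hy₁),
    hτsub, sub_sub_sub_comm, sub_mem_iff_of_relIndex_two hidx (sub_mem hx₂ (hτ _))
    (sub_mem hy₂ (hτ _)), ← mk_mem_cosetGraph, ← mk_mem_cosetGraph]

end CosetGraph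

section TranslationGroup

variable {A B : Type*} [AddCommGroup B]

/-- The translations of the second coordinate that preserve the part of `Ψ` lying over `S`. -/
def translationGroup (S : Set A) (Ψ : Set (A × B)) : AddSubgroup B where
  carrier := {k | ∀ a ∈ S, ∀ b, (a, b + k) ∈ Ψ ↔ (a, b) ∈ Ψ}
  zero_mem' := fun a _ b => by rw [add_zero]
  add_mem' := fun hk hl a ha b => by rw [← add_assoc, hl a ha, hk a ha]
  neg_mem' := fun {k} hk a ha b => by rw [← hk a ha (b + -k), neg_add_cancel_right]

lemma mem_translationGroup {S : Set A} {Ψ : Set (A × B)} {k : B} :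
    k ∈ translationGroup S Ψ ↔ ∀ a ∈ S, ∀ b, (a, b + k) ∈ Ψ ↔ (a, b) ∈ Ψ := Iff.rfl

end TranslationGroup

section RealRoots

/-- A set of real roots stable under its affine reflections, each of which acts by subtracting an
integral multiple. -/
structure IsRealRootSet (R : Set (V × Y)) : Prop where
  fst_ne_zero : ∀ x ∈ R, x.1 ≠ 0
  exists_int_pairing : ∀ a ∈ R, ∀ x ∈ R, ∃ n : ℤ, pairing x.1 a.1 = n
  reflAff_mem : ∀ a ∈ R, ∀ x ∈ R, reflAff a x ∈ R

lemma pairing_self {α : V} (hα : α ≠ 0) : pairing α α = 2 := by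
  have : ⟪α, α⟫ ≠ 0 := inner_self_ne_zero.2 hα
  rw [pairing]
  field_simp

lemma reflAff_eq_sub_zsmul {a x : V × Y} {n : ℤ} (h : pairing x.1 a.1 = n) :
    reflAff a x = x - n • a := by
  ext1 <;> simp [reflAff, reflRoot, h, Int.cast_smul_eq_zsmul]

lemma reflAff_self {a : V × Y} (ha : a.1 ≠ 0) : reflAff a a = -a := by
  rw [reflAff_eq_sub_zsmul (n := 2) (by simp [pairing_self ha])]
  abel

variable {R Ψ : Set (V × Y)}

lemma IsClosedSubSys.neg_mem (hR : IsRealRootSet R) (hΨ : IsClosedSubSys R Ψ) {x : V × Y}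
    (hx : x ∈ Ψ) : -x ∈ Ψ :=
  reflAff_self (hR.fst_ne_zero x (hΨ.1.2.1 hx)) ▸ hΨ.1.2.2.2 x hx x hx

lemma IsClosedSubSys.neg_mem_iff (hR : IsRealRootSet R) (hΨ : IsClosedSubSys R Ψ) {x : V × Y} :
    -x ∈ Ψ ↔ x ∈ Ψ :=
  ⟨fun hx => neg_neg x ▸ hΨ.neg_mem hR hx, hΨ.neg_mem hR⟩

lemma IsClosedSubSys.sub_mem (hR : IsRealRootSet R) (hΨ : IsClosedSubSys R Ψ) {x y : V × Y}
    (hx : x ∈ Ψ) (hy : y ∈ Ψ) (hxy : x - y ∈ R) : x - y ∈ Ψ := by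
  rw [sub_eq_add_neg] at hxy ⊢
  exact hΨ.2 x hx _ (hΨ.neg_mem hR hy) hxy

lemma IsClosedSubSys.isSubRS_gr (hΨ : IsClosedSubSys R Ψ) : IsSubRS (Gr R) (Gr Ψ) := by
  obtain ⟨⟨⟨x, hx⟩, hΨR, -, hrefl⟩, -⟩ := hΨ
  refine ⟨⟨x.1, x.2, hx⟩, fun α ⟨y, hy⟩ => ⟨y, hΨR hy⟩, ?_⟩
  rintro α ⟨y, hy⟩ β ⟨z, hz⟩
  exact ⟨_, hrefl _ hy _ hz⟩

lemma isClosedSubSys_inter_addSubgroup (hR : IsRealRootSet R) {M : AddSubgroup (V × Y)}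
    (hne : (R ∩ M).Nonempty) (hRM : ¬ R ⊆ M) : IsClosedSubSys R (R ∩ M) := by
  refine ⟨⟨hne, Set.inter_subset_left, fun h => hRM (Set.inter_eq_left.1 h), ?_⟩, ?_⟩
  · rintro a ⟨haR, haM⟩ x ⟨hxR, hxM⟩
    obtain ⟨n, hn⟩ := hR.exists_int_pairing a haR x hxR
    refine ⟨hR.reflAff_mem a haR x hxR, ?_⟩
    rw [reflAff_eq_sub_zsmul hn]
    exact M.sub_mem hxM (M.zsmul_mem haM n)
  · rintro x ⟨-, hxM⟩ y ⟨-, hyM⟩ hxy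
    exact ⟨hxy, M.add_mem hxM hyM⟩

lemma IsMaxClosedSubSys.eq_inter_addSubgroup (hR : IsRealRootSet R) (hΨ : IsMaxClosedSubSys R Ψ)
    {M : AddSubgroup (V × Y)} (hΨM : Ψ ⊆ M) (hRM : ¬ R ⊆ M) : Ψ = R ∩ M := by
  have hsub : Ψ ⊆ R ∩ M := Set.subset_inter hΨ.1.1.2.1 hΨM
  exact (hΨ.2 _ (isClosedSubSys_inter_addSubgroup hR (hΨ.1.1.1.mono hsub) hRM) hsub).symm

lemma IsMaxClosedSubSys.fst_mem_closure_Gr (hR : IsRealRootSet R) (hΨ : IsMaxClosedSubSys R Ψ)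
    (hzero : ∀ x ∈ R, (x.1, 0) ∈ R)
    (hGr : ¬ ∀ α ∈ Gr Ψ, ∀ β ∈ Gr Ψ, α + β ∈ Gr R → α + β ∈ Gr Ψ) {x : V × Y} (hx : x ∈ R) :
    x.1 ∈ AddSubgroup.closure (Gr Ψ) := by
  by_contra hx'
  let M := (AddSubgroup.closure (Gr Ψ)).comap (AddMonoidHom.fst V Y)
  have hΨM : Ψ = R ∩ M := hΨ.eq_inter_addSubgroup hR
    (fun y hy => AddSubgroup.subset_closure ⟨y.2, hy⟩) fun h => hx' (h hx)
  refine hGr fun α hα β hβ ⟨y, hy⟩ => ⟨0, ?_⟩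
  rw [hΨM]
  exact ⟨hzero _ hy,
    add_mem (AddSubgroup.subset_closure hα) (AddSubgroup.subset_closure hβ)⟩

/-- The translates of `Ψ` by `L` form a closed subroot system with the same gradient as `Ψ`, hence
a proper one. -/
lemma IsMaxClosedSubSys.add_mem_of_Gr_ne (hR : IsRealRootSet R) (hΨ : IsMaxClosedSubSys R Ψ)
    {L : AddSubgroup Y} (hL : ∀ x ∈ R, ∀ l ∈ L, x + (0, l) ∈ R) (hGr : Gr Ψ ≠ Gr R)
    {x : V × Y} (hx : x ∈ Ψ) {l : Y} (hl : l ∈ L) : x + (0, l) ∈ Ψ := by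
  have hΨR := hΨ.1.1.2.1
  let N := L.map (AddMonoidHom.inr V Y)
  have hN : ∀ x ∈ R, ∀ t ∈ N, x + t ∈ R := by
    rintro x hx _ ⟨l, hl, rfl⟩
    exact hL x hx l hl
  let Ψ' : Set (V × Y) := {x | ∃ t ∈ N, x + t ∈ Ψ}
  have hΨΨ' : Ψ ⊆ Ψ' := fun x hx => ⟨0, N.zero_mem, by rwa [add_zero]⟩
  have hGr' : Gr Ψ' ⊆ Gr Ψ := by
    rintro α ⟨y, _, ⟨l, -, rfl⟩, h⟩
    exact ⟨y + l, by simpa using h⟩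
  have hΨ'R : Ψ' ⊆ R := by
    rintro x ⟨t, ht, hx⟩
    simpa using hN _ (hΨR hx) _ (N.neg_mem ht)
  have hclosed : IsClosedSubSys R Ψ' := by
    refine ⟨⟨hΨ.1.1.1.mono hΨΨ', hΨ'R, ?_, ?_⟩, ?_⟩
    · intro h
      exact hGr (Set.Subset.antisymm (fun α ⟨y, hy⟩ => ⟨y, hΨR hy⟩) (h ▸ hGr'))
    · rintro a ⟨s, hs, ha⟩ x ⟨t, ht, hx⟩
      obtain ⟨n, hn⟩ := hR.exists_int_pairing _ (hΨR ha) _ (hΨR hx)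
      have hn' : pairing x.1 a.1 = n := by
        obtain ⟨_, -, rfl⟩ := hs
        obtain ⟨_, -, rfl⟩ := ht
        simpa using hn
      refine ⟨t - n • s, N.sub_mem ht (N.zsmul_mem hs n), ?_⟩
      convert hΨ.1.1.2.2.2 _ ha _ hx using 1
      rw [reflAff_eq_sub_zsmul hn, reflAff_eq_sub_zsmul hn', smul_add]
      abel
    · rintro x ⟨s, hs, hx⟩ y ⟨t, ht, hy⟩ hxy
      refine ⟨s + t, N.add_mem hs ht, ?_⟩
      rw [add_add_add_comm]
      exact hΨ.1.2 _ hx _ hy (add_add_add_comm x y s t ▸ hN _ hxy _ (N.add_mem hs ht))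
  rw [← hΨ.2 Ψ' hclosed hΨΨ']
  exact ⟨(0, -l), ⟨-l, L.neg_mem hl, rfl⟩, by simpa [add_assoc, ← Prod.zero_eq_mk] using hx⟩

end RealRoots

section ShortLattice

/-- The ℤ-span of the short roots of `F₄`, i.e. the lattice of Hurwitz quaternions. -/
abbrev shortLattice : AddSubgroup (E 4) := AddSubgroup.closure F4short

/-- Half the vector with coordinates `c i`; the short roots of `F₄` other than the `±ε_i` are
the `halfVec c` with `c i = ±1`. -/
def halfVec (c : Fin 4 → ℝ) : E 4 := (2:ℝ)⁻¹ • ∑ i, c i • eps i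

lemma eps_apply {n : ℕ} (i j : Fin n) : (eps i : E n) j = if j = i then 1 else 0 := by
  simp [eps]

lemma halfVec_apply (c : Fin 4 → ℝ) (i : Fin 4) : halfVec c i = c i / 2 := by
  simp [halfVec, eps_apply]
  ring

lemma inner_eq_sum {n : ℕ} (v w : E n) : ⟪v, w⟫ = ∑ i, v i * w i := by
  simp [PiLp.inner_apply, mul_comm]

lemma halfVec_mem_F4short {c : Fin 4 → ℝ} (hc : ∀ i, c i = 1 ∨ c i = -1) : halfVec c ∈ F4short :=
  Or.inr ⟨c, hc, rfl⟩

lemma neg_mem_F4short {v : E 4} (hv : v ∈ F4short) : -v ∈ F4short := by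
  rcases hv with ⟨i, rfl | rfl⟩ | ⟨c, hc, rfl⟩
  · exact Or.inl ⟨i, Or.inr rfl⟩
  · exact Or.inl ⟨i, Or.inl (neg_neg _)⟩
  · exact Or.inr ⟨-c, fun i => by simpa [neg_eq_iff_eq_neg, or_comm] using hc i, by simp⟩

lemma smul_eps_mem_F4short {c : ℝ} (hc : c = 1 ∨ c = -1) (i : Fin 4) : c • eps i ∈ F4short := by
  rcases hc with rfl | rfl
  · simpa using eps_mem_F4short i
  · simpa using neg_mem_F4short (eps_mem_F4short i)

lemma F4short_subset_shortLattice : F4short ⊆ shortLattice := AddSubgroup.subset_closure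

lemma longBC_subset_shortLattice : longBC 4 ⊆ shortLattice := by
  rintro _ ⟨i, j, -, c, d, hc, hd, rfl⟩
  exact add_mem (F4short_subset_shortLattice (smul_eps_mem_F4short hc i))
    (F4short_subset_shortLattice (smul_eps_mem_F4short hd j))

lemma F4_subset_shortLattice : F4 ⊆ shortLattice :=
  Set.union_subset F4short_subset_shortLattice longBC_subset_shortLattice

lemma exists_int_coord {v : E 4} (hv : v ∈ shortLattice) :
    ∃ (m : Fin 4 → ℤ) (t : ℤ), ∀ i, v i = m i + t / 2 := by
  induction hv using AddSubgroup.closure_induction with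
  | mem v hv =>
    have sign_eq : ∀ c : ℝ, c = 1 ∨ c = -1 → ∃ s : ℤ, c / 2 = s + (1 : ℤ) / 2 := by
      rintro c (rfl | rfl)
      · exact ⟨0, by norm_num⟩
      · exact ⟨-1, by norm_num⟩
    rcases hv with ⟨j, rfl | rfl⟩ | ⟨c, hc, rfl⟩
    · exact ⟨fun i => if i = j then 1 else 0, 0, fun i => by simp [eps_apply]⟩
    · exact ⟨fun i => -if i = j then 1 else 0, 0, fun i => by simp [eps_apply]⟩
    · choose s hs using fun i => sign_eq (c i) (hc i)
      exact ⟨s, 1, fun i => (halfVec_apply c i).trans (hs i)⟩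
  | zero => exact ⟨0, 0, fun i => by simp⟩
  | add v w _ _ hv hw =>
    obtain ⟨m, s, hm⟩ := hv
    obtain ⟨n, t, hn⟩ := hw
    refine ⟨m + n, s + t, fun i => ?_⟩
    simp only [PiLp.add_apply, hm, hn, Pi.add_apply, Int.cast_add]
    ring
  | neg v _ hv =>
    obtain ⟨m, t, hm⟩ := hv
    refine ⟨-m, -t, fun i => ?_⟩
    simp only [PiLp.neg_apply, hm, Pi.neg_apply, Int.cast_neg]
    ring

lemma coord_int_or_half_int {v : E 4} (hv : v ∈ shortLattice) :
    (∃ n : Fin 4 → ℤ, ∀ i, v i = n i) ∨ ∃ n : Fin 4 → ℤ, ∀ i, v i = n i + 1 / 2 := by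
  obtain ⟨m, t, hm⟩ := exists_int_coord hv
  rcases Int.even_or_odd' t with ⟨k, rfl | rfl⟩
  · refine Or.inl ⟨fun i => m i + k, fun i => ?_⟩
    rw [hm]
    push_cast
    ring
  · refine Or.inr ⟨fun i => m i + k, fun i => ?_⟩
    rw [hm]
    push_cast
    ring

lemma exists_int_inner_self {v : E 4} (hv : v ∈ shortLattice) : ∃ n : ℤ, ⟪v, v⟫ = n := by
  obtain ⟨m, t, hm⟩ := exists_int_coord hv
  refine ⟨∑ i, m i ^ 2 + t * ∑ i, m i + t ^ 2, ?_⟩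
  simp only [inner_eq_sum, hm, Fin.sum_univ_four]
  push_cast
  ring

lemma exists_int_two_mul_inner {v w : E 4} (hv : v ∈ shortLattice) (hw : w ∈ shortLattice) :
    ∃ n : ℤ, 2 * ⟪v, w⟫ = n := by
  obtain ⟨a, ha⟩ := exists_int_inner_self hv
  obtain ⟨b, hb⟩ := exists_int_inner_self hw
  obtain ⟨c, hc⟩ := exists_int_inner_self (add_mem hv hw)
  refine ⟨c - a - b, ?_⟩
  rw [real_inner_add_add_self] at hc
  push_cast
  linarith

lemma exists_int_inner_longBC {v α : E 4} (hv : v ∈ shortLattice) (hα : α ∈ longBC 4) :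
    ∃ n : ℤ, ⟪v, α⟫ = n := by
  obtain ⟨m, t, hm⟩ := exists_int_coord hv
  obtain ⟨i, j, -, c, d, hc, hd, rfl⟩ := hα
  have hinner : ⟪v, c • eps i + d • eps j⟫ = c * v i + d * v j := by
    simp [eps, inner_add_right, inner_smul_right, EuclideanSpace.inner_single_right]
  rw [hinner, hm, hm]
  rcases hc with rfl | rfl <;> rcases hd with rfl | rfl
  · exact ⟨m i + m j + t, by push_cast; ring⟩
  · exact ⟨m i - m j, by push_cast; ring⟩
  · exact ⟨-m i + m j, by push_cast; ring⟩
  · exact ⟨-m i - m j - t, by push_cast; ring⟩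

lemma inner_self_F4short {v : E 4} (hv : v ∈ F4short) : ⟪v, v⟫ = 1 := by
  rcases hv with ⟨i, rfl | rfl⟩ | ⟨c, hc, rfl⟩
  · simp [eps]
  · simp [eps]
  · change ⟪halfVec c, halfVec c⟫ = 1
    have hsq : ∀ i, c i / 2 * (c i / 2) = 1 / 4 := fun i => by
      rcases hc i with h | h <;> rw [h] <;> norm_num
    simp only [inner_eq_sum, halfVec_apply, hsq]
    norm_num

lemma inner_self_longBC {v : E 4} (hv : v ∈ longBC 4) : ⟪v, v⟫ = 2 := by
  obtain ⟨i, j, hij, c, d, hc, hd, rfl⟩ := hv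
  have horth : ⟪(eps i : E 4), eps j⟫ = 0 := by
    simp [eps, EuclideanSpace.inner_single_left, hij]
  have hself : ∀ k, ⟪(eps k : E 4), eps k⟫ = 1 := fun k => by simp [eps]
  rw [real_inner_add_add_self]
  simp only [real_inner_smul_left, real_inner_smul_right, horth, hself]
  rcases hc with rfl | rfl <;> rcases hd with rfl | rfl <;> norm_num

lemma mem_piFinset_of_sum_sq_lt_four {ι : Type*} [Fintype ι] [DecidableEq ι] {n : ι → ℤ}
    (h : ∑ i, n i ^ 2 < 4) : n ∈ Fintype.piFinset fun _ => Finset.Icc (-1 : ℤ) 1 := by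
  refine Fintype.mem_piFinset.2 fun i => Finset.mem_Icc.2 ?_
  have hi : n i ^ 2 < 2 ^ 2 :=
    (Finset.single_le_sum (fun j _ => sq_nonneg (n j)) (Finset.mem_univ i)).trans_lt h
  have := abs_lt_of_sq_lt_sq' hi (by norm_num)
  omega

lemma exists_eq_single_of_sum_sq_eq_one {n : Fin 4 → ℤ} (h : ∑ i, n i ^ 2 = 1) :
    ∃ i, (n i = 1 ∨ n i = -1) ∧ ∀ k, k ≠ i → n k = 0 := by
  have key : ∀ n ∈ Fintype.piFinset fun _ : Fin 4 => Finset.Icc (-1 : ℤ) 1, ∑ i, n i ^ 2 = 1 →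
      ∃ i, (n i = 1 ∨ n i = -1) ∧ ∀ k, k ≠ i → n k = 0 := by
    decide +kernel
  exact key n (mem_piFinset_of_sum_sq_lt_four (by omega)) h

lemma exists_eq_single_add_single_of_sum_sq_eq_two {n : Fin 4 → ℤ} (h : ∑ i, n i ^ 2 = 2) :
    ∃ i j, i ≠ j ∧ (n i = 1 ∨ n i = -1) ∧ (n j = 1 ∨ n j = -1) ∧
      ∀ k, k ≠ i → k ≠ j → n k = 0 := by
  have key : ∀ n ∈ Fintype.piFinset fun _ : Fin 4 => Finset.Icc (-1 : ℤ) 1, ∑ i, n i ^ 2 = 2 →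
      ∃ i j, i ≠ j ∧ (n i = 1 ∨ n i = -1) ∧ (n j = 1 ∨ n j = -1) ∧
        ∀ k, k ≠ i → k ≠ j → n k = 0 := by
    decide +kernel
  exact key n (mem_piFinset_of_sum_sq_lt_four (by omega)) h

lemma inner_self_of_coord_int {v : E 4} {n : Fin 4 → ℤ} (hn : ∀ i, v i = n i) :
    ⟪v, v⟫ = (∑ i, n i ^ 2 : ℤ) := by
  rw [inner_eq_sum]
  simp [hn, sq]

/-- Since `(n + 1/2)² = n (n + 1) + 1/4` and `n (n + 1)` is even. -/
lemma exists_inner_self_of_coord_half_int {v : E 4} {n : Fin 4 → ℤ} (hn : ∀ i, v i = n i + 1 / 2) :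
    ∃ k : Fin 4 → ℤ, (∀ i, n i * (n i + 1) = 2 * k i) ∧ ⟪v, v⟫ = (2 * ∑ i, k i + 1 : ℤ) := by
  choose k hk using fun i => (Int.even_mul_succ_self (n i)).two_dvd
  refine ⟨k, hk, ?_⟩
  have hsq : ∀ i, v i * v i = 2 * k i + 1 / 4 := fun i => by
    have hki : (n i : ℝ) * (n i + 1) = 2 * k i := mod_cast hk i
    rw [hn]
    linear_combination hki
  simp only [inner_eq_sum, hsq, Fin.sum_univ_four]
  push_cast
  ring

lemma mem_F4short_iff {v : E 4} : v ∈ F4short ↔ v ∈ shortLattice ∧ ⟪v, v⟫ = 1 := by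
  refine ⟨fun hv => ⟨F4short_subset_shortLattice hv, inner_self_F4short hv⟩, ?_⟩
  rintro ⟨hv, hnorm⟩
  rcases coord_int_or_half_int hv with ⟨n, hn⟩ | ⟨n, hn⟩
  · rw [inner_self_of_coord_int hn] at hnorm
    obtain ⟨i, hi, hne⟩ := exists_eq_single_of_sum_sq_eq_one (mod_cast hnorm)
    have hv : v = (n i : ℝ) • eps i := by
      ext k
      rcases eq_or_ne k i with rfl | hk <;> simp [eps_apply, *]
    rw [hv]
    exact smul_eps_mem_F4short (mod_cast hi) i
  · obtain ⟨k, hk, hself⟩ := exists_inner_self_of_coord_half_int hn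
    have hsum : ∑ i, k i = 0 := by
      rw [hself] at hnorm
      have : 2 * ∑ i, k i + 1 = 1 := mod_cast hnorm
      omega
    have hk0 : ∀ i, 0 ≤ k i := fun i => by nlinarith [hk i, mul_self_nonneg (2 * n i + 1)]
    have hzero : ∀ i, k i = 0 := fun i =>
      (Finset.sum_eq_zero_iff_of_nonneg fun i _ => hk0 i).1 hsum i (Finset.mem_univ i)
    have hv : v = halfVec fun i => 2 * n i + 1 := by
      ext i
      rw [halfVec_apply, hn]
      ring
    rw [hv]
    refine halfVec_mem_F4short fun i => ?_
    have hni : n i = 0 ∨ n i + 1 = 0 := by rw [← mul_eq_zero, hk, hzero, mul_zero]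
    rcases hni with h | h
    · left
      simp [h]
    · right
      rw [eq_neg_of_add_eq_zero_left h]
      norm_num

lemma mem_longBC_iff {v : E 4} : v ∈ longBC 4 ↔ v ∈ shortLattice ∧ ⟪v, v⟫ = 2 := by
  refine ⟨fun hv => ⟨longBC_subset_shortLattice hv, inner_self_longBC hv⟩, ?_⟩
  rintro ⟨hv, hnorm⟩
  rcases coord_int_or_half_int hv with ⟨n, hn⟩ | ⟨n, hn⟩
  · rw [inner_self_of_coord_int hn] at hnorm
    obtain ⟨i, j, hij, hi, hj, hne⟩ :=
      exists_eq_single_add_single_of_sum_sq_eq_two (mod_cast hnorm)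
    refine ⟨i, j, hij, n i, n j, mod_cast hi, mod_cast hj, ?_⟩
    ext k
    by_cases hki : k = i
    · simp [eps_apply, hn, hki, hij]
    by_cases hkj : k = j
    · simp [eps_apply, hn, hkj, hij.symm]
    · simp [eps_apply, hn, hki, hkj, hne k hki hkj]
  · obtain ⟨k, -, hself⟩ := exists_inner_self_of_coord_half_int hn
    rw [hself] at hnorm
    have : 2 * ∑ i, k i + 1 = 2 := mod_cast hnorm
    omega

end ShortLattice

section RootsF4

lemma eps_mem_longBC {i j : Fin 4} (hij : i ≠ j) {c d : ℝ} (hc : c = 1 ∨ c = -1)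
    (hd : d = 1 ∨ d = -1) : c • eps i + d • eps j ∈ longBC 4 :=
  ⟨i, j, hij, c, d, hc, hd, rfl⟩

lemma notMem_F4short_of_mem_longBC {α : E 4} (hα : α ∈ longBC 4) : α ∉ F4short := fun h => by
  have := (inner_self_F4short h).symm.trans (inner_self_longBC hα)
  norm_num at this

lemma exists_int_pairing_F4 {α v : E 4} (hα : α ∈ F4) (hv : v ∈ shortLattice) :
    ∃ n : ℤ, pairing v α = n := by
  rcases hα with hα | hα
  · simpa only [pairing, inner_self_F4short hα, div_one] using
      exists_int_two_mul_inner hv (F4short_subset_shortLattice hα)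
  · simpa only [pairing, inner_self_longBC hα, mul_div_cancel_left₀ _ (two_ne_zero' ℝ)] using
      exists_int_inner_longBC hv hα

lemma inner_self_reflRoot {α : V} (hα : α ≠ 0) (v : V) :
    ⟪reflRoot α v, reflRoot α v⟫ = ⟪v, v⟫ := by
  have : ⟪α, α⟫ ≠ 0 := inner_self_ne_zero.2 hα
  simp only [reflRoot, pairing, real_inner_sub_sub_self, real_inner_smul_left,
    real_inner_smul_right]
  field_simp
  ring

lemma F4_ne_zero {α : E 4} (hα : α ∈ F4) : α ≠ 0 := by
  rintro rfl
  rcases hα with h | h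
  · simpa using inner_self_F4short h
  · simpa using inner_self_longBC h

lemma reflRoot_mem_shortLattice {α v : E 4} (hα : α ∈ F4) (hv : v ∈ shortLattice) :
    reflRoot α v ∈ shortLattice := by
  obtain ⟨n, hn⟩ := exists_int_pairing_F4 hα hv
  rw [reflRoot, hn, Int.cast_smul_eq_zsmul]
  exact sub_mem hv (zsmul_mem (F4_subset_shortLattice hα) n)

lemma reflRoot_mem_F4 {α v : E 4} (hα : α ∈ F4) (hv : v ∈ F4) : reflRoot α v ∈ F4 := by
  have hL := reflRoot_mem_shortLattice hα (F4_subset_shortLattice hv)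
  have hnorm := inner_self_reflRoot (F4_ne_zero hα) v
  rcases hv with hv | hv
  · exact Or.inl (mem_F4short_iff.2 ⟨hL, hnorm.trans (inner_self_F4short hv)⟩)
  · exact Or.inr (mem_longBC_iff.2 ⟨hL, hnorm.trans (inner_self_longBC hv)⟩)

lemma eq_or_sub_mem_F4short_of_inner_pos {v α : E 4} (hv : v ∈ F4short) (hα : α ∈ F4)
    (hpos : 0 < ⟪v, α⟫) : v = α ∨ v - α ∈ F4short := by
  have hvL := F4short_subset_shortLattice hv
  have hvv := inner_self_F4short hv
  have hL : v - α ∈ shortLattice := sub_mem hvL (F4_subset_shortLattice hα)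
  have hnorm := real_inner_sub_sub_self v α
  have hnonneg := real_inner_self_nonneg (x := v - α)
  rcases hα with hα | hα
  · obtain ⟨n, hn⟩ := exists_int_two_mul_inner hvL (F4short_subset_shortLattice hα)
    rw [inner_self_F4short hα, hvv, hn] at hnorm
    have hn0 : 0 < n := by exact_mod_cast hn ▸ mul_pos two_pos hpos
    have hn2 : n ≤ 2 := by
      have : (n : ℝ) ≤ 2 := by linarith
      exact_mod_cast this
    obtain rfl | rfl : n = 1 ∨ n = 2 := by omega
    · exact Or.inr (mem_F4short_iff.2 ⟨hL, by rw [hnorm]; norm_num⟩)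
    · exact Or.inl (sub_eq_zero.1 (inner_self_eq_zero (𝕜 := ℝ).1 (by rw [hnorm]; norm_num)))
  · obtain ⟨n, hn⟩ := exists_int_inner_longBC hvL hα
    rw [inner_self_longBC hα, hvv, hn] at hnorm
    have hn0 : 0 < n := by exact_mod_cast hn ▸ hpos
    have hn1 : 2 * n ≤ 3 := by
      have : (2 * n : ℝ) ≤ 3 := by linarith
      exact_mod_cast this
    obtain rfl : n = 1 := by omega
    exact Or.inr (mem_F4short_iff.2 ⟨hL, by rw [hnorm]; norm_num⟩)

lemma sub_notMem_F4short_of_mem_longBC {α β : E 4} (hα : α ∈ longBC 4) (hβ : β ∈ longBC 4) :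
    α - β ∉ F4short := fun h => by
  obtain ⟨n, hn⟩ := exists_int_inner_longBC (longBC_subset_shortLattice hα) hβ
  have hnorm := real_inner_sub_sub_self α β
  rw [inner_self_F4short h, inner_self_longBC hα, inner_self_longBC hβ, hn] at hnorm
  have : (1 : ℤ) = 2 - 2 * n + 2 := by exact_mod_cast hnorm
  omega

lemma halfVec_update_neg (c : Fin 4 → ℝ) (i : Fin 4) :
    halfVec (Function.update c i (-c i)) = halfVec c - c i • eps i := by
  ext j
  rcases eq_or_ne j i with rfl | hj
  · simp [halfVec_apply, eps_apply]
    ring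
  · simp [halfVec_apply, eps_apply, hj]

lemma halfVec_sub_smul_eps_mem_F4short {c : Fin 4 → ℝ} (hc : ∀ i, c i = 1 ∨ c i = -1)
    (i : Fin 4) : halfVec c - c i • eps i ∈ F4short := by
  rw [← halfVec_update_neg]
  refine halfVec_mem_F4short fun j => ?_
  rcases eq_or_ne j i with rfl | hj
  · simpa [neg_eq_iff_eq_neg, or_comm] using hc j
  · simpa [hj] using hc j

lemma smul_eps_sub_halfVec_mem_F4short {c : Fin 4 → ℝ} (hc : ∀ i, c i = 1 ∨ c i = -1)
    (i : Fin 4) : c i • eps i - halfVec c ∈ F4short := by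
  rw [← neg_sub]
  exact neg_mem_F4short (halfVec_sub_smul_eps_mem_F4short hc i)

lemma exists_add_eq_of_mem_longBC {α : E 4} (hα : α ∈ longBC 4) :
    ∃ β ∈ F4short, ∃ γ ∈ F4short, β + γ = α := by
  obtain ⟨i, j, -, c, d, hc, hd, rfl⟩ := hα
  exact ⟨_, smul_eps_mem_F4short hc i, _, smul_eps_mem_F4short hd j, rfl⟩

lemma exists_F4short_sub_mem_F4short {α : E 4} (hα : α ∈ F4) :
    ∃ β ∈ F4short, β - α ∈ F4short := by
  rcases hα with (⟨i, hα⟩ | ⟨c, hc, rfl⟩) | hα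
  · obtain ⟨c, hc, rfl⟩ : ∃ c : ℝ, (c = 1 ∨ c = -1) ∧ α = c • eps i := by
      rcases hα with rfl | rfl
      · exact ⟨1, by simp⟩
      · exact ⟨-1, by simp⟩
    exact ⟨_, halfVec_mem_F4short fun _ => hc, halfVec_sub_smul_eps_mem_F4short (fun _ => hc) i⟩
  · exact ⟨_, smul_eps_mem_F4short (hc 0) 0, smul_eps_sub_halfVec_mem_F4short hc 0⟩
  · obtain ⟨β, hβ, γ, hγ, rfl⟩ := exists_add_eq_of_mem_longBC hα
    exact ⟨β, hβ, by simpa using neg_mem_F4short hγ⟩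

/-- Every half vector is joined, up to sign, to every `ε_i`. -/
lemma F4short_connected {P : E 4 → Prop} (hneg : ∀ α ∈ F4short, P α → P (-α))
    (hstep : ∀ α ∈ F4short, ∀ β ∈ F4short, β - α ∈ F4short → P α → P β) {α β : E 4}
    (hα : α ∈ F4short) (hβ : β ∈ F4short) (hP : P α) : P β := by
  have hneg_iff : ∀ γ ∈ F4short, P (-γ) ↔ P γ := fun γ hγ =>
    ⟨fun h => neg_neg γ ▸ hneg _ (neg_mem_F4short hγ) h, hneg γ hγ⟩
  have hsmul : ∀ (c : ℝ) (i : Fin 4), c = 1 ∨ c = -1 → (P (c • eps i) ↔ P (eps i)) := by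
    rintro c i (rfl | rfl)
    · rw [one_smul]
    · rw [neg_one_smul, hneg_iff _ (eps_mem_F4short i)]
  have hhalf : ∀ (c : Fin 4 → ℝ) (i : Fin 4), (∀ i, c i = 1 ∨ c i = -1) →
      (P (halfVec c) ↔ P (eps i)) := fun c i hc => by
    have hi := smul_eps_mem_F4short (hc i) i
    rw [← hsmul (c i) i (hc i)]
    exact ⟨hstep _ (halfVec_mem_F4short hc) _ hi (smul_eps_sub_halfVec_mem_F4short hc i),
      hstep _ hi _ (halfVec_mem_F4short hc) (halfVec_sub_smul_eps_mem_F4short hc i)⟩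
  have hone : ∀ γ ∈ F4short, P γ ↔ P (halfVec 1) := by
    rintro γ (⟨i, rfl | rfl⟩ | ⟨c, hc, rfl⟩)
    · exact (hhalf 1 i fun _ => Or.inl rfl).symm
    · rw [hneg_iff _ (eps_mem_F4short i), hhalf 1 i fun _ => Or.inl rfl]
    · exact (hhalf c 0 hc).trans (hhalf 1 0 fun _ => Or.inl rfl).symm
  exact (hone β hβ).2 ((hone α hα).1 hP)

end RootsF4

section ShortBase

/-- A ℤ-basis of `shortLattice`: `ε₁`, `ε₂`, `ε₃` and `(ε₁ + ε₂ + ε₃ + ε₄) / 2`. -/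
def shortBase : Fin 4 → shortLattice :=
  ![epsF4 0, epsF4 1, epsF4 2,
    ⟨halfVec 1, F4short_subset_shortLattice (halfVec_mem_F4short fun _ => Or.inl rfl)⟩]

lemma coe_shortBase_mem_F4short (i : Fin 4) : (shortBase i : E 4) ∈ F4short := by
  fin_cases i
  · exact eps_mem_F4short 0
  · exact eps_mem_F4short 1
  · exact eps_mem_F4short 2
  · exact halfVec_mem_F4short fun _ => Or.inl rfl

/-- The vector of signs that is `-1` exactly at the indices in `I`. -/
def signVec (I : Finset (Fin 4)) (i : Fin 4) : ℝ := if i ∈ I then -1 else 1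

lemma signVec_eq_one_or_neg_one (I : Finset (Fin 4)) (i : Fin 4) :
    signVec I i = 1 ∨ signVec I i = -1 := by
  by_cases hi : i ∈ I <;> simp [signVec, hi]

lemma exists_eq_signVec {c : Fin 4 → ℝ} (hc : ∀ i, c i = 1 ∨ c i = -1) : ∃ I, c = signVec I := by
  refine ⟨Finset.univ.filter (c · = -1), funext fun i => ?_⟩
  rcases hc i with h | h <;> norm_num [signVec, h]

lemma halfVec_signVec_insert {I : Finset (Fin 4)} {i : Fin 4} (hi : i ∉ I) :
    halfVec (signVec (insert i I)) = halfVec (signVec I) - eps i := by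
  have hsign : signVec I i = 1 := if_neg hi
  have hupdate : signVec (insert i I) = Function.update (signVec I) i (-signVec I i) := by
    ext j
    rcases eq_or_ne j i with rfl | hj
    · simp [signVec, hi]
    · simp [signVec, hj]
  rw [hupdate, halfVec_update_neg, hsign, one_smul]

lemma F4short_induction {P : E 4 → Prop} (hbase : ∀ i, P (shortBase i))
    (hneg : ∀ α ∈ F4short, P α → P (-α))
    (hsub : ∀ α ∈ F4short, ∀ β ∈ F4short, α - β ∈ F4short → P α → P β → P (α - β))
    {v : E 4} (hv : v ∈ F4short) : P v := by
  have hmem : ∀ I, halfVec (signVec I) ∈ F4short := fun I =>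
    halfVec_mem_F4short (signVec_eq_one_or_neg_one I)
  have hhalf : ∀ I : Finset (Fin 4), (∀ i ∈ I, P (eps i)) → P (halfVec (signVec I)) := by
    intro I hI
    induction I using Finset.induction_on with
    | empty => exact hbase 3
    | insert i I hi ih =>
      have hinsert := halfVec_signVec_insert hi
      rw [hinsert]
      exact hsub _ (hmem I) _ (eps_mem_F4short i) (hinsert ▸ hmem _)
        (ih fun j hj => hI j (Finset.mem_insert_of_mem hj)) (hI i (Finset.mem_insert_self i I))
  have heps3 : P (eps 3) := by
    have hsplit : eps 3 = halfVec (signVec {0, 1, 2}) - -halfVec 1 := by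
      ext i
      fin_cases i <;> simp [signVec, eps_apply, halfVec_apply] <;> norm_num
    have h1 := halfVec_mem_F4short (c := 1) fun _ => Or.inl rfl
    rw [hsplit]
    refine hsub _ (hmem _) _ (neg_mem_F4short h1) (hsplit ▸ eps_mem_F4short 3)
      (hhalf _ fun i hi => ?_) (hneg _ h1 (hbase 3))
    fin_cases i
    exacts [hbase 0, hbase 1, hbase 2, absurd hi (by decide)]
  have heps : ∀ i, P (eps i) := fun i => by
    fin_cases i
    exacts [hbase 0, hbase 1, hbase 2, heps3]
  rcases hv with ⟨i, rfl | rfl⟩ | ⟨c, hc, rfl⟩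
  · exact heps i
  · exact hneg _ (eps_mem_F4short i) (heps i)
  · obtain ⟨I, rfl⟩ := exists_eq_signVec hc
    exact hhalf I fun i _ => heps i

lemma linearIndependent_shortBase : LinearIndependent ℤ shortBase := by
  rw [Fintype.linearIndependent_iff]
  intro g hg
  have hcoord : ∀ j, ∑ i, (g i : ℝ) * (shortBase i : E 4) j = 0 := fun j => by
    simpa using congrArg (fun v : shortLattice => (v : E 4) j) hg
  have hval : (shortBase 0 : E 4) = eps 0 ∧ (shortBase 1 : E 4) = eps 1 ∧
      (shortBase 2 : E 4) = eps 2 ∧ (shortBase 3 : E 4) = halfVec 1 := ⟨rfl, rfl, rfl, rfl⟩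
  simp only [Fin.sum_univ_four, hval, eps_apply, halfVec_apply] at hcoord
  have h3 : g 3 = 0 := by simpa using hcoord 3
  intro i
  fin_cases i
  · simpa [h3] using hcoord 0
  · simpa [h3] using hcoord 1
  · simpa [h3] using hcoord 2
  · exact h3

lemma span_shortBase : Submodule.span ℤ (Set.range shortBase) = ⊤ := by
  let S := (Submodule.span ℤ (Set.range shortBase)).toAddSubgroup.map shortLattice.subtype
  have hS : shortLattice ≤ S := by
    refine (AddSubgroup.closure_le S).2 fun v hv => F4short_induction (P := (· ∈ S)) (fun i => ?_)
      (fun α _ hα => S.neg_mem hα) (fun α _ β _ _ hα hβ => S.sub_mem hα hβ) hv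
    exact ⟨shortBase i, Submodule.subset_span ⟨i, rfl⟩, rfl⟩
  rw [eq_top_iff]
  rintro ⟨v, hv⟩ -
  obtain ⟨w, hw, rfl⟩ := hS hv
  exact hw

lemma exists_addMonoidHom_shortBase {G : Type*} [AddCommGroup G] (t : Fin 4 → G) :
    ∃ τ : shortLattice →+ G, ∀ i, τ (shortBase i) = t i := by
  let b := Module.Basis.mk linearIndependent_shortBase span_shortBase.ge
  refine ⟨(b.constr ℤ t).toAddMonoidHom, fun i => ?_⟩
  have := b.constr_basis ℤ t i
  rwa [Module.Basis.mk_apply] at this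

end ShortBase

section PositiveInner

lemma exists_mem_inner_pos {s : Multiset V} (h : s.sum ≠ 0) : ∃ δ ∈ s, 0 < ⟪s.sum, δ⟫ := by
  by_contra! hs
  have hsum : ⟪s.sum, s.sum⟫ = (s.map fun δ => ⟪s.sum, δ⟫).sum :=
    map_multiset_sum (innerₛₗ ℝ s.sum) s
  have := real_inner_self_pos.2 h
  have hle : (s.map fun δ => ⟪s.sum, δ⟫).sum ≤ 0 := by
    simpa using Multiset.sum_le_card_nsmul (s.map fun δ => ⟪s.sum, δ⟫) 0 (by simpa using hs)
  linarith

lemma mem_of_mem_F4short_of_mem_closure {Δ : Set (E 4)} (hΔ : Δ ⊆ F4)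
    (hneg : ∀ α ∈ Δ, -α ∈ Δ) (hadd : ∀ α ∈ Δ, ∀ β ∈ Δ, α + β ∈ F4short → α + β ∈ Δ)
    {v : E 4} (hv : v ∈ F4short) (hvΔ : v ∈ AddSubgroup.closure Δ) : v ∈ Δ := by
  have hmultiset : ∀ (n : ℕ) (s : Multiset (E 4)), s.card = n → (∀ δ ∈ s, δ ∈ Δ) →
      s.sum ∈ F4short → s.sum ∈ Δ := by
    intro n
    induction n with
    | zero =>
      intro s hs _ hsum
      rw [Multiset.card_eq_zero.1 hs, Multiset.sum_zero] at hsum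
      exact absurd rfl (F4_ne_zero (Or.inl hsum))
    | succ n ih =>
      intro s hs hsΔ hsum
      obtain ⟨δ, hδ, hpos⟩ := exists_mem_inner_pos (F4_ne_zero (Or.inl hsum))
      obtain ⟨t, rfl⟩ := Multiset.exists_cons_of_mem hδ
      rw [Multiset.sum_cons] at hsum hpos ⊢
      rcases eq_or_sub_mem_F4short_of_inner_pos hsum (hΔ (hsΔ δ hδ)) hpos with h | h
      · rw [h]
        exact hsΔ δ hδ
      · rw [add_sub_cancel_left] at h
        refine hadd _ (hsΔ δ hδ) _ (ih t (by simpa using hs) (fun δ' hδ' => ?_) h) hsum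
        exact hsΔ δ' (Multiset.mem_cons_of_mem hδ')
  have hclosure : v ∈ AddSubmonoid.closure Δ := by
    have hunion : Δ ∪ -Δ = Δ := Set.union_eq_left.2 fun α hα => neg_neg α ▸ hneg _ hα
    rwa [← AddSubgroup.mem_toAddSubmonoid, AddSubgroup.closure_toAddSubmonoid, hunion] at hvΔ
  obtain ⟨s, hs, rfl⟩ := AddSubmonoid.exists_multiset_of_mem_closure hclosure
  exact hmultiset _ s rfl hs hv

end PositiveInner

section Datum

/-- The part of the definition of an extension datum of type `F₄` that the classification uses:
its fibres are `Λs` over the short roots and `Λl` over the long roots, and they are compatible with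
the reflections. -/
structure IsF4Datum (Λ : E 4 → Set Y) (Λs Λl : AddSubgroup Y) : Prop where
  sub_smul_mem : ∀ α ∈ F4, ∀ β ∈ F4, ∀ z ∈ Λ α, ∀ y ∈ Λ β,
    y - pairing β α • z ∈ Λ (reflRoot α β)
  short_eq : ∀ α ∈ F4short, Λ α = Λs
  long_eq : ∀ α ∈ longBC 4, Λ α = Λl

namespace IsF4Datum

variable {Λ : E 4 → Set Y} {Λs Λl : AddSubgroup Y}

lemma mk_mem_iff_of_short (hD : IsF4Datum Λ Λs Λl) {α : E 4} (hα : α ∈ F4short) {y : Y} :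
    (α, y) ∈ PhiRe F4 Λ ↔ y ∈ Λs := by
  simp [PhiRe, F4, hα, hD.short_eq α hα]

lemma mk_mem_iff_of_long (hD : IsF4Datum Λ Λs Λl) {α : E 4} (hα : α ∈ longBC 4) {y : Y} :
    (α, y) ∈ PhiRe F4 Λ ↔ y ∈ Λl := by
  simp [PhiRe, F4, hα, hD.long_eq α hα]

lemma two_nsmul_mem (hD : IsF4Datum Λ Λs Λl) {y : Y} (hy : y ∈ Λs) : 2 • y ∈ Λl := by
  have hpairing : pairing (eps 0 + eps 1 : E 4) (eps 0) = 2 := by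
    simp [pairing, eps, inner_add_left, EuclideanSpace.inner_single_left]
  have hrefl : reflRoot (eps 0) (eps 0 + eps 1 : E 4) = -eps 0 + eps 1 := by
    rw [reflRoot, hpairing]
    module
  have hlong : (eps 0 + eps 1 : E 4) ∈ longBC 4 := ⟨0, 1, by decide, 1, 1, by simp⟩
  have hlong' : (-eps 0 + eps 1 : E 4) ∈ longBC 4 := ⟨0, 1, by decide, -1, 1, by simp⟩
  have h := hD.sub_smul_mem _ (Or.inl (eps_mem_F4short 0)) _ (Or.inr hlong) y
    (hD.short_eq _ (eps_mem_F4short 0) ▸ hy) 0 (hD.long_eq _ hlong ▸ Λl.zero_mem)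
  rw [hrefl, hpairing, hD.long_eq _ hlong', zero_sub, ofNat_smul_eq_nsmul] at h
  exact neg_mem_iff.1 h

lemma le (hD : IsF4Datum Λ Λs Λl) : Λl ≤ Λs := by
  intro y hy
  have hlong : (eps 0 + eps 1 : E 4) ∈ longBC 4 := ⟨0, 1, by decide, 1, 1, by simp⟩
  have hpairing : pairing (eps 0) (eps 0 + eps 1 : E 4) = 1 := by
    rw [pairing, inner_self_longBC hlong]
    simp [eps, inner_add_right, EuclideanSpace.inner_single_left]
  have hrefl : reflRoot (eps 0 + eps 1) (eps 0 : E 4) = -eps 1 := by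
    rw [reflRoot, hpairing]
    module
  have h := hD.sub_smul_mem _ (Or.inr hlong) _ (Or.inl (eps_mem_F4short 0)) y
    (hD.long_eq _ hlong ▸ hy) 0 (hD.short_eq _ (eps_mem_F4short 0) ▸ Λs.zero_mem)
  rw [hrefl, hpairing, hD.short_eq _ (neg_mem_F4short (eps_mem_F4short 1)), zero_sub,
    one_smul] at h
  exact neg_mem_iff.1 h

lemma snd_mem (hD : IsF4Datum Λ Λs Λl) {x : E 4 × Y} (hx : x ∈ PhiRe F4 Λ) : x.2 ∈ Λs := by
  rcases hx.1 with hα | hα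
  · exact (hD.mk_mem_iff_of_short hα).1 hx
  · exact hD.le ((hD.mk_mem_iff_of_long hα).1 hx)

lemma mk_zero_mem (hD : IsF4Datum Λ Λs Λl) {α : E 4} (hα : α ∈ F4) : (α, 0) ∈ PhiRe F4 Λ := by
  rcases hα with hα | hα
  · exact (hD.mk_mem_iff_of_short hα).2 Λs.zero_mem
  · exact (hD.mk_mem_iff_of_long hα).2 Λl.zero_mem

lemma add_mem (hD : IsF4Datum Λ Λs Λl) {x : E 4 × Y} (hx : x ∈ PhiRe F4 Λ) {l : Y}
    (hl : l ∈ Λl) : x + (0, l) ∈ PhiRe F4 Λ := by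
  obtain ⟨α, y⟩ := x
  rw [Prod.mk_add_mk, add_zero]
  rcases hx.1 with hα | hα
  · exact (hD.mk_mem_iff_of_short hα).2 (Λs.add_mem (hD.snd_mem hx) (hD.le hl))
  · exact (hD.mk_mem_iff_of_long hα).2 (Λl.add_mem ((hD.mk_mem_iff_of_long hα).1 hx) hl)

lemma isRealRootSet (hD : IsF4Datum Λ Λs Λl) : IsRealRootSet (PhiRe F4 Λ) where
  fst_ne_zero _ hx := F4_ne_zero hx.1
  exists_int_pairing _ ha _ hx := exists_int_pairing_F4 ha.1 (F4_subset_shortLattice hx.1)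
  reflAff_mem _ ha _ hx :=
    ⟨reflRoot_mem_F4 ha.1 hx.1, hD.sub_smul_mem _ ha.1 _ hx.1 _ ha.2 _ hx.2⟩

lemma gr_phiRe (hD : IsF4Datum Λ Λs Λl) : Gr (PhiRe F4 Λ) = F4 :=
  Set.Subset.antisymm (fun _ ⟨_, hy⟩ => hy.1) fun _ hα => ⟨0, hD.mk_zero_mem hα⟩

end IsF4Datum

end Datum

section IndexTwoLift

/-- `τ` lifts a ℤ-linear map from the short roots to `Λs ⧸ H`, where `H` has index two in `Λs` and
contains `Λl`. -/
structure IsIndexTwoLift {B : Type*} [AddCommGroup B] (Λs Λl H : AddSubgroup B)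
    (τ : shortLattice →+ B) : Prop where
  le : H ≤ Λs
  ge : Λl ≤ H
  relIndex_eq : H.relIndex Λs = 2
  apply_mem : ∀ v, τ v ∈ Λs

namespace IsIndexTwoLift

lemma mk_mem_cosetGraph_iff_of_long {B : Type*} [AddCommGroup B] {Λs Λl H : AddSubgroup B}
    {τ : shortLattice →+ B} (hτ : IsIndexTwoLift Λs Λl H τ) {α : E 4} (hα : α ∈ longBC 4) {y : B}
    (hy : y ∈ Λl) :
    (α, y) ∈ cosetGraph τ H ↔ τ ⟨α, longBC_subset_shortLattice hα⟩ ∈ H := by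
  rw [mk_mem_cosetGraph (longBC_subset_shortLattice hα), sub_mem_comm_iff, sub_eq_add_neg,
    add_mem_cancel_right (neg_mem (hτ.ge hy))]

variable {Λ : E 4 → Set Y} {Λs Λl H : AddSubgroup Y} {τ : shortLattice →+ Y}

lemma sub_mem_cosetGraph_iff (hτ : IsIndexTwoLift Λs Λl H τ) (hD : IsF4Datum Λ Λs Λl)
    {x y : E 4 × Y} (hx : x ∈ PhiRe F4 Λ) (hy : y ∈ PhiRe F4 Λ) :
    x - y ∈ cosetGraph τ H ↔ (x ∈ cosetGraph τ H ↔ y ∈ cosetGraph τ H) :=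
  BdS.sub_mem_cosetGraph_iff hτ.relIndex_eq hτ.apply_mem (F4_subset_shortLattice hx.1)
    (hD.snd_mem hx) (F4_subset_shortLattice hy.1) (hD.snd_mem hy)

lemma exists_notMem_cosetGraph (hτ : IsIndexTwoLift Λs Λl H τ) (hD : IsF4Datum Λ Λs Λl)
    {α : E 4} (hα : α ∈ F4short) : ∃ y, (α, y) ∈ PhiRe F4 Λ ∧ (α, y) ∉ cosetGraph τ H := by
  obtain ⟨g, hg, hgH⟩ := exists_notMem_of_relIndex_two hτ.relIndex_eq
  have hαL := F4short_subset_shortLattice hα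
  refine ⟨τ ⟨α, hαL⟩ + g, (hD.mk_mem_iff_of_short hα).2 (Λs.add_mem (hτ.apply_mem _) hg), ?_⟩
  rwa [mk_mem_cosetGraph hαL, add_sub_cancel_left]

lemma mem_gr_of_short (hτ : IsIndexTwoLift Λs Λl H τ) (hD : IsF4Datum Λ Λs Λl) {α : E 4}
    (hα : α ∈ F4short) : α ∈ Gr (PhiRe F4 Λ ∩ cosetGraph τ H) := by
  have hαL := F4short_subset_shortLattice hα
  refine ⟨τ ⟨α, hαL⟩, (hD.mk_mem_iff_of_short hα).2 (hτ.apply_mem _), ?_⟩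
  simp [mk_mem_cosetGraph hαL]

lemma mem_gr_iff_of_long (hτ : IsIndexTwoLift Λs Λl H τ) (hD : IsF4Datum Λ Λs Λl) {α : E 4}
    (hα : α ∈ longBC 4) :
    α ∈ Gr (PhiRe F4 Λ ∩ cosetGraph τ H) ↔ τ ⟨α, longBC_subset_shortLattice hα⟩ ∈ H := by
  constructor
  · rintro ⟨y, hyR, hyM⟩
    exact (hτ.mk_mem_cosetGraph_iff_of_long hα ((hD.mk_mem_iff_of_long hα).1 hyR)).1 hyM
  · intro h
    exact ⟨0, hD.mk_zero_mem (Or.inr hα),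
      (hτ.mk_mem_cosetGraph_iff_of_long hα Λl.zero_mem).2 h⟩

lemma isClosedSubSys (hτ : IsIndexTwoLift Λs Λl H τ) (hD : IsF4Datum Λ Λs Λl) :
    IsClosedSubSys (PhiRe F4 Λ) (PhiRe F4 Λ ∩ cosetGraph τ H) := by
  have h0 := eps_mem_F4short 0
  obtain ⟨y, hy⟩ := hτ.mem_gr_of_short hD h0
  obtain ⟨z, hzR, hzM⟩ := hτ.exists_notMem_cosetGraph hD h0
  exact isClosedSubSys_inter_addSubgroup hD.isRealRootSet ⟨_, hy⟩ fun h => hzM (h hzR)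

/-- Two real roots outside the coset graph, which has index two, differ by an element of it. -/
lemma mk_mem_of_notMem_cosetGraph (hτ : IsIndexTwoLift Λs Λl H τ) (hD : IsF4Datum Λ Λs Λl)
    {Ψ : Set (E 4 × Y)} (hΨ : IsClosedSubSys (PhiRe F4 Λ) Ψ)
    (hsub : PhiRe F4 Λ ∩ cosetGraph τ H ⊆ Ψ) {x : E 4 × Y} (hx : x ∈ Ψ)
    (hxM : x ∉ cosetGraph τ H) {β : E 4} (hβ : β ∈ F4short) (hβx : β - x.1 ∈ F4short) {z : Y}
    (hz : z ∈ Λs) : (β, z) ∈ Ψ := by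
  have hxR := hΨ.1.2.1 hx
  have hβR : (β, z) ∈ PhiRe F4 Λ := (hD.mk_mem_iff_of_short hβ).2 hz
  by_cases hβM : (β, z) ∈ cosetGraph τ H
  · exact hsub ⟨hβR, hβM⟩
  have hdiff : (β, z) - x ∈ Ψ := hsub
    ⟨(hD.mk_mem_iff_of_short hβx).2 (Λs.sub_mem hz (hD.snd_mem hxR)),
      (hτ.sub_mem_cosetGraph_iff hD hβR hxR).2 (iff_of_false hβM hxM)⟩
  have hsum := hΨ.2 _ hdiff _ hx
  rw [sub_add_cancel] at hsum
  exact hsum hβR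

lemma isMaxClosedSubSys (hτ : IsIndexTwoLift Λs Λl H τ) (hD : IsF4Datum Λ Λs Λl) :
    IsMaxClosedSubSys (PhiRe F4 Λ) (PhiRe F4 Λ ∩ cosetGraph τ H) := by
  refine ⟨hτ.isClosedSubSys hD, fun Ψ hΨ hsub => Set.Subset.antisymm ?_ hsub⟩
  by_contra hnsub
  obtain ⟨x, hx, hxM⟩ : ∃ x ∈ Ψ, x ∉ cosetGraph τ H := by
    by_contra! h
    exact hnsub fun x hx => ⟨hΨ.1.2.1 hx, h x hx⟩
  obtain ⟨β, hβ, hβx⟩ := exists_F4short_sub_mem_F4short (hΨ.1.2.1 hx).1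
  have hshort : ∀ α ∈ F4short, ∀ z ∈ Λs, (α, z) ∈ Ψ := fun α hα =>
    F4short_connected (P := fun α => ∀ z ∈ Λs, (α, z) ∈ Ψ)
      (fun α _ hP z hz => by
        simpa using hΨ.neg_mem hD.isRealRootSet (hP (-z) (Λs.neg_mem hz)))
      (fun α hα β hβ hβα hP z hz => by
        obtain ⟨y, hyR, hyM⟩ := hτ.exists_notMem_cosetGraph hD hα
        exact hτ.mk_mem_of_notMem_cosetGraph hD hΨ hsub (hP y (hD.snd_mem hyR)) hyM hβ hβα hz)
      hβ hα fun z hz => hτ.mk_mem_of_notMem_cosetGraph hD hΨ hsub hx hxM hβ hβx hz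
  refine hΨ.1.2.2.1 (Set.Subset.antisymm hΨ.1.2.1 ?_)
  rintro ⟨α, z⟩ hαz
  rcases hαz.1 with hα | hα
  · exact hshort α hα z (hD.snd_mem hαz)
  · obtain ⟨β, hβ, γ, hγ, rfl⟩ := exists_add_eq_of_mem_longBC hα
    have hsum := hΨ.2 _ (hshort β hβ z (hD.snd_mem hαz)) _ (hshort γ hγ 0 Λs.zero_mem)
    rw [Prod.mk_add_mk, add_zero] at hsum
    exact hsum hαz

lemma add_mem_gr_of_long_left (hτ : IsIndexTwoLift Λs Λl H τ) (hD : IsF4Datum Λ Λs Λl)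
    {α β : E 4} (hα : α ∈ longBC 4) (hαGr : α ∈ Gr (PhiRe F4 Λ ∩ cosetGraph τ H))
    (hβGr : β ∈ Gr (PhiRe F4 Λ ∩ cosetGraph τ H)) (hαβ : α + β ∈ F4) :
    α + β ∈ Gr (PhiRe F4 Λ ∩ cosetGraph τ H) := by
  rcases hαβ with hαβ | hαβ
  · exact hτ.mem_gr_of_short hD hαβ
  have hβ : β ∈ longBC 4 := by
    obtain ⟨y, hβR, -⟩ := hβGr
    refine hβR.1.resolve_left fun h => sub_notMem_F4short_of_mem_longBC hαβ hα ?_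
    rwa [add_sub_cancel_left]
  rw [hτ.mem_gr_iff_of_long hD hα] at hαGr
  rw [hτ.mem_gr_iff_of_long hD hβ] at hβGr
  rw [hτ.mem_gr_iff_of_long hD hαβ]
  exact (map_add τ ⟨α, longBC_subset_shortLattice hα⟩ ⟨β, longBC_subset_shortLattice hβ⟩) ▸
    H.add_mem hαGr hβGr

lemma isSemiClosedSubRS_gr (hτ : IsIndexTwoLift Λs Λl H τ) (hD : IsF4Datum Λ Λs Λl)
    {α : E 4} (hα : α ∈ longBC 4) (hαH : τ ⟨α, longBC_subset_shortLattice hα⟩ ∉ H) :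
    IsSemiClosedSubRS F4 F4short (longBC 4) ∅ (Gr (PhiRe F4 Λ ∩ cosetGraph τ H)) := by
  have hsub : IsSubRS F4 (Gr (PhiRe F4 Λ ∩ cosetGraph τ H)) := by
    have hGr := (hτ.isClosedSubSys hD).isSubRS_gr
    rwa [hD.gr_phiRe] at hGr
  refine ⟨hsub, fun hclosed => ?_, fun β hβ γ hγ hβγ hβγGr => Or.inl ⟨?_, ?_, Or.inl ?_⟩⟩
  · obtain ⟨β, hβ, γ, hγ, rfl⟩ := exists_add_eq_of_mem_longBC hα
    exact hαH ((hτ.mem_gr_iff_of_long hD hα).1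
      (hclosed β (hτ.mem_gr_of_short hD hβ) γ (hτ.mem_gr_of_short hD hγ) (Or.inr hα)))
  · exact (hsub.2.1 hβ).resolve_right fun h =>
      hβγGr (hτ.add_mem_gr_of_long_left hD h hβ hγ hβγ)
  · rw [add_comm] at hβγ hβγGr
    exact (hsub.2.1 hγ).resolve_right fun h =>
      hβγGr (hτ.add_mem_gr_of_long_left hD h hγ hβ hβγ)
  · exact hβγ.resolve_left fun h => hβγGr (hτ.mem_gr_of_short hD h)

end IsIndexTwoLift

end IndexTwoLift

section SemiClosedGradient

lemma IsSemiClosedSubRS.add_mem_of_add_mem_F4short {Δ : Set (E 4)}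
    (hΔ : IsSemiClosedSubRS F4 F4short (longBC 4) ∅ Δ) {α β : E 4} (hα : α ∈ Δ) (hβ : β ∈ Δ)
    (hαβ : α + β ∈ F4short) : α + β ∈ Δ := by
  by_contra h
  rcases hΔ.2.2 α hα β hβ (Or.inl hαβ) h with ⟨-, -, hlong | hempty⟩ | ⟨-, -, hempty⟩
  · exact notMem_F4short_of_mem_longBC hlong hαβ
  · exact hempty
  · exact hempty

lemma IsSemiClosedSubRS.exists_longBC_notMem {Δ : Set (E 4)}
    (hΔ : IsSemiClosedSubRS F4 F4short (longBC 4) ∅ Δ) : ∃ α ∈ longBC 4, α ∉ Δ := by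
  have hnotclosed := hΔ.2.1
  push Not at hnotclosed
  obtain ⟨α, hα, β, hβ, hαβ, hnotMem⟩ := hnotclosed
  exact ⟨α + β, hαβ.resolve_left fun h =>
    hnotMem (hΔ.add_mem_of_add_mem_F4short hα hβ h), hnotMem⟩

variable {Λ : E 4 → Set Y} {Λs Λl : AddSubgroup Y} {Ψ : Set (E 4 × Y)}

lemma F4short_subset_gr (hD : IsF4Datum Λ Λs Λl) (hΨ : IsMaxClosedSubSys (PhiRe F4 Λ) Ψ)
    (hsemi : IsSemiClosedSubRS F4 F4short (longBC 4) ∅ (Gr Ψ)) : F4short ⊆ Gr Ψ := by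
  intro α hα
  have hneg : ∀ β ∈ Gr Ψ, -β ∈ Gr Ψ := fun β ⟨y, hy⟩ => ⟨-y, hΨ.1.neg_mem hD.isRealRootSet hy⟩
  refine mem_of_mem_F4short_of_mem_closure hsemi.1.2.1 hneg
    (fun β hβ γ hγ => hsemi.add_mem_of_add_mem_F4short hβ hγ) hα ?_
  exact hΨ.fst_mem_closure_Gr hD.isRealRootSet (fun x hx => hD.mk_zero_mem hx.1)
    (hD.gr_phiRe.symm ▸ hsemi.2.1) (hD.mk_zero_mem (Or.inl hα))

lemma exists_addMonoidHom_mk_mem (hD : IsF4Datum Λ Λs Λl)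
    (hΨ : IsClosedSubSys (PhiRe F4 Λ) Ψ) (hshort : F4short ⊆ Gr Ψ) :
    ∃ τ : shortLattice →+ Y, (∀ v, τ v ∈ Λs) ∧
      ∀ (α : E 4) (hα : α ∈ F4short), (α, τ ⟨α, F4short_subset_shortLattice hα⟩) ∈ Ψ := by
  choose t ht using fun i => hshort (coe_shortBase_mem_F4short i)
  obtain ⟨τ, hτ⟩ := exists_addMonoidHom_shortBase
    fun i => (⟨t i, hD.snd_mem (hΨ.1.2.1 (ht i))⟩ : Λs)
  refine ⟨Λs.subtype.comp τ, fun v => (τ v).2, fun α hα => ?_⟩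
  suffices ∃ h : α ∈ shortLattice, (α, (τ ⟨α, h⟩ : Y)) ∈ Ψ from this.2
  refine F4short_induction (P := fun α => ∃ h : α ∈ shortLattice, (α, (τ ⟨α, h⟩ : Y)) ∈ Ψ)
    (fun i => ⟨(shortBase i).2, ?_⟩) (fun α _ ⟨h, hαΨ⟩ => ⟨neg_mem h, ?_⟩)
    (fun α _ β _ hαβ ⟨hα, hαΨ⟩ ⟨hβ, hβΨ⟩ => ⟨sub_mem hα hβ, ?_⟩) hα
  · rw [Subtype.coe_eta, hτ]
    exact ht i
  · have hneg := hΨ.neg_mem hD.isRealRootSet hαΨ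
    rwa [Prod.neg_mk, ← AddSubgroup.coe_neg, ← map_neg] at hneg
  · have hsub := hΨ.sub_mem hD.isRealRootSet hαΨ hβΨ
    rw [Prod.mk_sub_mk, ← AddSubgroup.coe_sub, ← map_sub] at hsub
    exact hsub ((hD.mk_mem_iff_of_short hαβ).2 (τ _).2)

lemma mk_add_sub_mem (hD : IsF4Datum Λ Λs Λl) (hΨ : IsClosedSubSys (PhiRe F4 Λ) Ψ) {α β : E 4}
    (hβ : β ∈ F4short) (hβα : β - α ∈ F4short) {y z b : Y} (hy : (α, y) ∈ Ψ) (hz : (α, z) ∈ Ψ)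
    (hb : (β, b) ∈ Ψ) : (β, b + (y - z)) ∈ Ψ := by
  have hyΛ : y ∈ Λs := hD.snd_mem (hΨ.1.2.1 hy)
  have hzΛ : z ∈ Λs := hD.snd_mem (hΨ.1.2.1 hz)
  have hbΛ : b ∈ Λs := hD.snd_mem (hΨ.1.2.1 hb)
  have hsub : (β - α, b - z) ∈ Ψ := hΨ.sub_mem hD.isRealRootSet hb hz
    ((hD.mk_mem_iff_of_short hβα).2 (Λs.sub_mem hbΛ hzΛ))
  have hsum := hΨ.2 _ hsub _ hy
  rw [Prod.mk_add_mk, sub_add_cancel, sub_add_comm, add_comm _ b] at hsum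
  exact hsum ((hD.mk_mem_iff_of_short hβ).2 (Λs.add_mem hbΛ (Λs.sub_mem hyΛ hzΛ)))

/-- The difference of two elements of one fibre translates a neighbouring short fibre into itself,
hence, by connectedness, all of them. -/
lemma sub_mem_translationGroup (hD : IsF4Datum Λ Λs Λl) (hΨ : IsClosedSubSys (PhiRe F4 Λ) Ψ)
    (hshort : F4short ⊆ Gr Ψ) {α : E 4} {y z : Y} (hy : (α, y) ∈ Ψ) (hz : (α, z) ∈ Ψ) :
    y - z ∈ translationGroup F4short Ψ := by
  set d := y - z with hd
  have hstep : ∀ α : E 4, ∀ β ∈ F4short, β - α ∈ F4short → ∀ z, (α, z + d) ∈ Ψ → (α, z) ∈ Ψ →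
      ∀ b, (β, b + d) ∈ Ψ ↔ (β, b) ∈ Ψ := fun α β hβ hβα z hzd hz b =>
    ⟨fun hb => by simpa using mk_add_sub_mem hD hΨ hβ hβα hz hzd hb,
      fun hb => by simpa using mk_add_sub_mem hD hΨ hβ hβα hzd hz hb⟩
  obtain ⟨β, hβ, hβα⟩ := exists_F4short_sub_mem_F4short (hΨ.1.2.1 hy).1
  intro γ hγ
  refine F4short_connected (P := fun γ => ∀ b, (γ, b + d) ∈ Ψ ↔ (γ, b) ∈ Ψ) ?_ ?_ hβ hγ
    (hstep α β hβ hβα z (by rwa [hd, add_sub_cancel]) hz)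
  · intro γ _ hP b
    rw [← hΨ.neg_mem_iff hD.isRealRootSet, ← hΨ.neg_mem_iff hD.isRealRootSet (x := (-γ, b)),
      Prod.neg_mk, Prod.neg_mk, neg_neg, ← hP (-(b + d)), neg_add, neg_add_cancel_right]
  · intro γ hγ δ hδ hδγ hP
    obtain ⟨b, hb⟩ := hshort hγ
    exact hstep γ δ hδ hδγ b ((hP b).2 hb) hb

lemma sub_apply_mem_translationGroup (hD : IsF4Datum Λ Λs Λl)
    (hΨ : IsClosedSubSys (PhiRe F4 Λ) Ψ) {τ : shortLattice →+ Y} (hτΛ : ∀ v, τ v ∈ Λs)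
    (hτΨ : ∀ (α : E 4) (hα : α ∈ F4short), (α, τ ⟨α, F4short_subset_shortLattice hα⟩) ∈ Ψ)
    {α : E 4} {y : Y} (hy : (α, y) ∈ Ψ) (hα : α ∈ shortLattice) :
    y - τ ⟨α, hα⟩ ∈ translationGroup F4short Ψ := by
  obtain ⟨β, hβ, hβα⟩ := exists_F4short_sub_mem_F4short (hΨ.1.2.1 hy).1
  have hβL := F4short_subset_shortLattice hβ
  have hτsub : τ ⟨β - α, sub_mem hβL hα⟩ = τ ⟨β, hβL⟩ - τ ⟨α, hα⟩ := map_sub τ ⟨β, hβL⟩ ⟨α, hα⟩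
  have hsum := hΨ.2 _ hy _ (hτΨ _ hβα)
  rw [Prod.mk_add_mk, add_sub_cancel, hτsub] at hsum
  have hsumΨ := hsum ((hD.mk_mem_iff_of_short hβ).2
    (Λs.add_mem (hD.snd_mem (hΨ.1.2.1 hy)) (Λs.sub_mem (hτΛ _) (hτΛ _))))
  have hdiff := sub_mem_translationGroup hD hΨ (fun γ hγ => ⟨_, hτΨ γ hγ⟩) hsumΨ (hτΨ β hβ)
  rwa [add_sub_left_comm, add_sub_cancel_left] at hdiff

lemma apply_notMem_translationGroup (hD : IsF4Datum Λ Λs Λl)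
    (hΨ : IsClosedSubSys (PhiRe F4 Λ) Ψ) {τ : shortLattice →+ Y}
    (hτΨ : ∀ (α : E 4) (hα : α ∈ F4short), (α, τ ⟨α, F4short_subset_shortLattice hα⟩) ∈ Ψ)
    {α : E 4} (hα : α ∈ longBC 4) (hαΨ : α ∉ Gr Ψ) :
    τ ⟨α, longBC_subset_shortLattice hα⟩ ∉ translationGroup F4short Ψ := by
  intro hτα
  obtain ⟨β, hβ, γ, hγ, rfl⟩ := exists_add_eq_of_mem_longBC hα
  have hβL := F4short_subset_shortLattice hβ
  have hγL := F4short_subset_shortLattice hγ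
  have hτadd : τ ⟨β + γ, longBC_subset_shortLattice hα⟩ = τ ⟨β, hβL⟩ + τ ⟨γ, hγL⟩ :=
    map_add τ ⟨β, hβL⟩ ⟨γ, hγL⟩
  have hγΨ : (γ, -τ ⟨β, hβL⟩) ∈ Ψ := by
    rw [← hτα γ hγ, hτadd, neg_add_cancel_left]
    exact hτΨ γ hγ
  have hsum := hΨ.2 _ (hτΨ β hβ) _ hγΨ
  rw [Prod.mk_add_mk, add_neg_cancel] at hsum
  exact hαΨ ⟨0, hsum (hD.mk_zero_mem (Or.inr hα))⟩

lemma translationGroup_le (hD : IsF4Datum Λ Λs Λl) (hΨR : Ψ ⊆ PhiRe F4 Λ)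
    (hshort : F4short ⊆ Gr Ψ) : translationGroup F4short Ψ ≤ Λs := by
  intro k hk
  obtain ⟨y, hy⟩ := hshort (eps_mem_F4short 0)
  have hyk := (mem_translationGroup.1 hk _ (eps_mem_F4short 0) y).2 hy
  simpa using Λs.sub_mem (hD.snd_mem (hΨR hyk)) (hD.snd_mem (hΨR hy))

lemma le_translationGroup (hD : IsF4Datum Λ Λs Λl) (hΨ : IsMaxClosedSubSys (PhiRe F4 Λ) Ψ)
    (hGr : Gr Ψ ≠ F4) : Λl ≤ translationGroup F4short Ψ := by
  have hadd : ∀ x ∈ Ψ, ∀ l ∈ Λl, x + (0, l) ∈ Ψ := fun x hx l hl =>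
    hΨ.add_mem_of_Gr_ne hD.isRealRootSet (fun y hy l hl => hD.add_mem hy hl)
      (hD.gr_phiRe.symm ▸ hGr) hx hl
  exact fun l hl α _ y => ⟨fun h => by simpa using hadd _ h _ (Λl.neg_mem hl),
    fun h => by simpa using hadd _ h _ hl⟩

theorem exists_isIndexTwoLift (hD : IsF4Datum Λ Λs Λl) (hΨ : IsMaxClosedSubSys (PhiRe F4 Λ) Ψ)
    (hsemi : IsSemiClosedSubRS F4 F4short (longBC 4) ∅ (Gr Ψ)) :
    ∃ (H : AddSubgroup Y) (τ : shortLattice →+ Y), IsIndexTwoLift Λs Λl H τ ∧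
      (∃ v ∈ longBC 4, ∃ hv : v ∈ shortLattice, τ ⟨v, hv⟩ ∉ H) ∧
        Ψ = PhiRe F4 Λ ∩ cosetGraph τ H := by
  have hshort := F4short_subset_gr hD hΨ hsemi
  obtain ⟨τ, hτΛ, hτΨ⟩ := exists_addMonoidHom_mk_mem hD hΨ.1 hshort
  obtain ⟨α, hα, hαΨ⟩ := hsemi.exists_longBC_notMem
  have hle := le_translationGroup hD hΨ fun h => hαΨ (h ▸ Or.inr hα)
  obtain ⟨H, hKH, hHΛ, hαH, hidx⟩ := exists_notMem_relIndex_two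
    (translationGroup_le hD hΨ.1.1.2.1 hshort) (fun y hy => hle (hD.two_nsmul_mem hy)) (hτΛ _)
    (apply_notMem_translationGroup hD hΨ.1 hτΨ hα hαΨ)
  have hτ : IsIndexTwoLift Λs Λl H τ := ⟨hHΛ, hle.trans hKH, hidx, hτΛ⟩
  obtain ⟨y, hyR, hyM⟩ := hτ.exists_notMem_cosetGraph hD (eps_mem_F4short 0)
  refine ⟨H, τ, hτ, ⟨α, hα, _, hαH⟩,
    hΨ.eq_inter_addSubgroup hD.isRealRootSet ?_ fun h => hyM (h hyR)⟩
  exact fun x hx => ⟨F4_subset_shortLattice (hΨ.1.1.2.1 hx).1,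
    hKH (sub_apply_mem_translationGroup hD hΨ.1 hτΛ hτΨ hx _)⟩

end SemiClosedGradient

section Splitting

lemma forall_sub_mem_iff {ι G : Type*} [AddCommGroup G] {H : AddSubgroup G} {I : Finset ι}
    {t : ι → G} : (∀ i j, t i - t j ∈ H ↔ (i ∈ I ↔ j ∈ I)) ↔
      (∀ i j, ((i ∈ I ∧ j ∈ I) ∨ (i ∉ I ∧ j ∉ I)) → t i - t j ∈ H) ∧
        ∀ r s, r ∈ I → s ∉ I → t r - t s ∉ H := by
  simp only [← iff_iff_and_or_not_and_not]
  refine ⟨fun h => ⟨fun i j => (h i j).2, fun r s hr hs hmem => hs (((h r s).1 hmem).1 hr)⟩, ?_⟩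
  rintro ⟨hsame, hdiff⟩ i j
  refine ⟨fun hmem => ?_, hsame i j⟩
  by_contra hij
  have h := not_iff.1 hij
  by_cases hj : j ∈ I
  · exact hdiff j i hj (h.2 hj) (sub_mem_comm_iff.1 hmem)
  · exact hdiff i j (not_not.1 fun hi => hj (h.1 hi)) hj hmem

lemma apply_smul_eps_mem_iff {G : Type*} [AddCommGroup G] {τ : shortLattice →+ G}
    {H : AddSubgroup G} {c : ℝ} (hc : c = 1 ∨ c = -1) {i : Fin 4} (h : c • eps i ∈ shortLattice) :
    τ ⟨c • eps i, h⟩ ∈ H ↔ τ (epsF4 i) ∈ H := by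
  rcases hc with rfl | rfl
  · rw [show (⟨(1 : ℝ) • eps i, h⟩ : shortLattice) = epsF4 i from Subtype.ext (one_smul ℝ _)]
  · rw [show (⟨(-1 : ℝ) • eps i, h⟩ : shortLattice) = -epsF4 i from
      Subtype.ext (neg_one_smul ℝ _), map_neg, neg_mem_iff]

namespace IsIndexTwoLift

variable {B : Type*} [AddCommGroup B] {Λs Λl H : AddSubgroup B} {τ : shortLattice →+ B}
  {I : Finset (Fin 4)}

lemma apply_longBC_mem_iff (hτ : IsIndexTwoLift Λs Λl H τ) {i j : Fin 4} {c d : ℝ}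
    (hc : c = 1 ∨ c = -1) (hd : d = 1 ∨ d = -1) (h : c • eps i + d • eps j ∈ shortLattice) :
    τ ⟨c • eps i + d • eps j, h⟩ ∈ H ↔ τ (epsF4 i) - τ (epsF4 j) ∈ H := by
  have hi := F4short_subset_shortLattice (smul_eps_mem_F4short hc i)
  have hj := F4short_subset_shortLattice (smul_eps_mem_F4short hd j)
  have hadd : τ ⟨c • eps i + d • eps j, h⟩ = τ ⟨c • eps i, hi⟩ + τ ⟨d • eps j, hj⟩ :=
    map_add τ ⟨c • eps i, hi⟩ ⟨d • eps j, hj⟩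
  rw [hadd, add_mem_iff_of_relIndex_two hτ.relIndex_eq (hτ.apply_mem _) (hτ.apply_mem _),
    sub_mem_iff_of_relIndex_two hτ.relIndex_eq (hτ.apply_mem _) (hτ.apply_mem _),
    apply_smul_eps_mem_iff hc, apply_smul_eps_mem_iff hd]

/-- `ε₀ - ε₁ + ε₂ - ε₃` is twice a short root, so `τ` maps it into `H`. -/
lemma mem_iff_mem_iff_mem_iff_mem (hτ : IsIndexTwoLift Λs Λl H τ)
    (hI : ∀ i j, τ (epsF4 i) - τ (epsF4 j) ∈ H ↔ (i ∈ I ↔ j ∈ I)) :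
    (0 ∈ I ↔ 1 ∈ I) ↔ (2 ∈ I ↔ 3 ∈ I) := by
  have hc : ∀ i, (![1, -1, 1, -1] : Fin 4 → ℝ) i = 1 ∨ (![1, -1, 1, -1] : Fin 4 → ℝ) i = -1 := by
    intro i
    fin_cases i <;> simp
  let h : shortLattice := ⟨halfVec _, F4short_subset_shortLattice (halfVec_mem_F4short hc)⟩
  have hdouble : epsF4 0 - epsF4 1 + (epsF4 2 - epsF4 3) = h + h := by
    ext i
    change (eps 0 - eps 1 + (eps 2 - eps 3) : E 4) i = (halfVec _ + halfVec _ : E 4) i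
    fin_cases i <;> simp [eps_apply, halfVec_apply] <;> norm_num
  rw [← hI, ← hI, ← map_sub, ← map_sub,
    ← add_mem_iff_of_relIndex_two hτ.relIndex_eq (hτ.apply_mem _) (hτ.apply_mem _), ← map_add,
    hdouble, map_add, add_mem_iff_of_relIndex_two hτ.relIndex_eq (hτ.apply_mem _) (hτ.apply_mem _)]

lemma card_eq_two_iff (hτ : IsIndexTwoLift Λs Λl H τ)
    (hI : ∀ i j, τ (epsF4 i) - τ (epsF4 j) ∈ H ↔ (i ∈ I ↔ j ∈ I)) :
    I.card = 2 ↔ ∃ v ∈ longBC 4, ∃ hv : v ∈ shortLattice, τ ⟨v, hv⟩ ∉ H := by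
  constructor
  · intro hcard
    obtain ⟨r, s, hrs, hmem⟩ : ∃ r s, r ≠ s ∧ ¬(r ∈ I ↔ s ∈ I) := by
      have key : ∀ I : Finset (Fin 4), I.card = 2 → ∃ r s, r ≠ s ∧ ¬(r ∈ I ↔ s ∈ I) := by decide
      exact key I hcard
    have hlong := eps_mem_longBC hrs (c := 1) (d := 1) (Or.inl rfl) (Or.inl rfl)
    refine ⟨_, hlong, longBC_subset_shortLattice hlong, ?_⟩
    rwa [hτ.apply_longBC_mem_iff (Or.inl rfl) (Or.inl rfl), hI]
  · rintro ⟨_, ⟨i, j, -, c, d, hc, hd, rfl⟩, hv, hvH⟩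
    rw [hτ.apply_longBC_mem_iff hc hd, hI] at hvH
    have key : ∀ I : Finset (Fin 4), ((0 ∈ I ↔ 1 ∈ I) ↔ (2 ∈ I ↔ 3 ∈ I)) →
        ∀ i j, ¬(i ∈ I ↔ j ∈ I) → I.card = 2 := by decide
    exact key I (hτ.mem_iff_mem_iff_mem_iff_mem hI) i j hvH

lemma phiRe_inter_cosetGraph_eq [Module ℝ B] {Λ : E 4 → Set B} (hD : IsF4Datum Λ Λs Λl)
    (hτ : IsIndexTwoLift Λs Λl H τ)
    (hI : ∀ i j, τ (epsF4 i) - τ (epsF4 j) ∈ H ↔ (i ∈ I ↔ j ∈ I)) :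
    PhiRe F4 Λ ∩ cosetGraph τ H =
      {x | ∃ h : x.1 ∈ F4short, x.2 ∈ Λs ∧ x.2 - τ ⟨x.1, F4short_subset_shortLattice h⟩ ∈ H} ∪
        {x | (∃ i j : Fin 4, i ≠ j ∧ ((i ∈ I ∧ j ∈ I) ∨ (i ∉ I ∧ j ∉ I)) ∧
          ∃ c d : ℝ, (c = 1 ∨ c = -1) ∧ (d = 1 ∨ d = -1) ∧ x.1 = c • eps i + d • eps j) ∧
            x.2 ∈ Λl} := by
  ext ⟨α, y⟩
  simp only [← iff_iff_and_or_not_and_not, ← hI]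
  constructor
  · rintro ⟨hR, hM⟩
    rcases hR.1 with hα | ⟨i, j, hij, c, d, hc, hd, rfl⟩
    · exact Or.inl ⟨hα, hD.snd_mem hR, (mk_mem_cosetGraph _).1 hM⟩
    · have hy := (hD.mk_mem_iff_of_long (eps_mem_longBC hij hc hd)).1 hR
      have hmem := (hτ.mk_mem_cosetGraph_iff_of_long (eps_mem_longBC hij hc hd) hy).1 hM
      exact Or.inr ⟨⟨i, j, hij, (hτ.apply_longBC_mem_iff hc hd _).1 hmem, c, d, hc, hd, rfl⟩, hy⟩
  · rintro (⟨hα, hy, hM⟩ | ⟨⟨i, j, hij, hmem, c, d, hc, hd, rfl⟩, hy⟩)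
    · exact ⟨(hD.mk_mem_iff_of_short hα).2 hy, (mk_mem_cosetGraph _).2 hM⟩
    · have hα := eps_mem_longBC hij hc hd
      exact ⟨(hD.mk_mem_iff_of_long hα).2 hy, (hτ.mk_mem_cosetGraph_iff_of_long hα hy).2
        ((hτ.apply_longBC_mem_iff hc hd _).2 hmem)⟩

end IsIndexTwoLift

end Splitting

theorem statement11_general {Λ : E 4 → Set Y} {Λs Λl : AddSubgroup Y} (hD : IsF4Datum Λ Λs Λl)
    (Ψ : Set (E 4 × Y)) :
    (IsMaxClosedSubSys (PhiRe F4 Λ) Ψ ∧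
        IsSemiClosedSubRS F4 F4short (longBC 4) ∅ (Gr Ψ)) ↔
      ∃ (H : AddSubgroup Y) (I : Finset (Fin 4)) (τ : AddSubgroup.closure F4short →+ Y),
        H ≤ Λs ∧ (H.addSubgroupOf Λs).index = 2 ∧ Λl ≤ H ∧ I.card = 2 ∧
        (∀ x, τ x ∈ Λs) ∧
        (∀ i j : Fin 4, ((i ∈ I ∧ j ∈ I) ∨ (i ∉ I ∧ j ∉ I)) →
          τ (epsF4 i) - τ (epsF4 j) ∈ H) ∧
        (∀ r s : Fin 4, r ∈ I → s ∉ I → τ (epsF4 r) - τ (epsF4 s) ∉ H) ∧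
        Ψ = {x | ∃ h : x.1 ∈ F4short,
              x.2 ∈ Λs ∧ x.2 - τ ⟨x.1, AddSubgroup.subset_closure h⟩ ∈ H} ∪
            {x | (∃ i j : Fin 4, i ≠ j ∧ ((i ∈ I ∧ j ∈ I) ∨ (i ∉ I ∧ j ∉ I)) ∧
              ∃ c d : ℝ, (c = 1 ∨ c = -1) ∧ (d = 1 ∨ d = -1) ∧
                x.1 = c • eps i + d • eps j) ∧ x.2 ∈ Λl} := by
  constructor
  · rintro ⟨hΨ, hsemi⟩
    obtain ⟨H, τ, hτ, hlong, hΨeq⟩ := exists_isIndexTwoLift hD hΨ hsemi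
    classical
    let I : Finset (Fin 4) := Finset.univ.filter fun i => τ (epsF4 i) ∈ H
    have hI : ∀ i j, τ (epsF4 i) - τ (epsF4 j) ∈ H ↔ (i ∈ I ↔ j ∈ I) := fun i j => by
      simpa [I] using
        sub_mem_iff_of_relIndex_two hτ.relIndex_eq (hτ.apply_mem (epsF4 i)) (hτ.apply_mem (epsF4 j))
    obtain ⟨hsame, hdiff⟩ := forall_sub_mem_iff.1 hI
    exact ⟨H, I, τ, hτ.le, hτ.relIndex_eq, hτ.ge, (hτ.card_eq_two_iff hI).2 hlong, hτ.apply_mem,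
      hsame, hdiff, hΨeq.trans (hτ.phiRe_inter_cosetGraph_eq hD hI)⟩
  · rintro ⟨H, I, τ, hHΛ, hidx, hΛH, hcard, hτΛ, hsame, hdiff, rfl⟩
    have hτ : IsIndexTwoLift Λs Λl H τ := ⟨hHΛ, hΛH, hidx, hτΛ⟩
    have hI := forall_sub_mem_iff.2 ⟨hsame, hdiff⟩
    obtain ⟨α, hα, _, hαH⟩ := (hτ.card_eq_two_iff hI).1 hcard
    have heq := hτ.phiRe_inter_cosetGraph_eq hD hI
    exact ⟨heq ▸ hτ.isMaxClosedSubSys hD, heq ▸ hτ.isSemiClosedSubRS_gr hD hα hαH⟩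

/-- Theorem 4.2 (type `F₄`): maximal closed subroot systems with semi-closed
gradient.  The ℤ-linear map `τ : Φ̊_s → Λ_s/H` is encoded by a lift
`τ : ⟨Φ̊_s⟩ →+ Y` with values in `Λ_s`. -/
theorem statement11 {Y : Type*} [AddCommGroup Y] [Module ℝ Y] [FiniteDimensional ℝ Y]
    (Λ : E 4 → Set Y) (Λs Λl : AddSubgroup Y)
    (hED : IsExtensionDatum F4 Λ)
    (hs : ∀ α ∈ F4short, Λ α = (Λs : Set Y)) (hl : ∀ α ∈ longBC 4, Λ α = (Λl : Set Y))
    (hls : Λl ≤ Λs)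
    (Ψ : Set (E 4 × Y)) :
    (IsMaxClosedSubSys (PhiRe F4 Λ) Ψ ∧
        IsSemiClosedSubRS F4 F4short (longBC 4) ∅ (Gr Ψ)) ↔
      ∃ (H : AddSubgroup Y) (I : Finset (Fin 4)) (τ : AddSubgroup.closure F4short →+ Y),
        H ≤ Λs ∧ (H.addSubgroupOf Λs).index = 2 ∧ Λl ≤ H ∧ I.card = 2 ∧
        (∀ x, τ x ∈ Λs) ∧
        (∀ i j : Fin 4, ((i ∈ I ∧ j ∈ I) ∨ (i ∉ I ∧ j ∉ I)) →
          τ (epsF4 i) - τ (epsF4 j) ∈ H) ∧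
        (∀ r s : Fin 4, r ∈ I → s ∉ I → τ (epsF4 r) - τ (epsF4 s) ∉ H) ∧
        Ψ = {x | ∃ h : x.1 ∈ F4short,
              x.2 ∈ Λs ∧ x.2 - τ ⟨x.1, AddSubgroup.subset_closure h⟩ ∈ H} ∪
            {x | (∃ i j : Fin 4, i ≠ j ∧ ((i ∈ I ∧ j ∈ I) ∨ (i ∉ I ∧ j ∉ I)) ∧
              ∃ c d : ℝ, (c = 1 ∨ c = -1) ∧ (d = 1 ∨ d = -1) ∧
                x.1 = c • eps i + d • eps j) ∧ x.2 ∈ Λl} :=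
  statement11_general ⟨hED.1, hs, hl⟩ Ψ

end BdS
end
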